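/- arXiv:2105.13201 — 6 statements merged into one kernel-verified Lean document; each statement's English description precedes it below -/
import Mathlib

section
/- Let d ≥ 1 and let K : 𝕋^d → ℝ^d be a measurable kernel satisfying either (i) K is bounded, or (ii) K(−x) = −K(x) for all x, K(0) = 0, and sup_x |x|·|K(x)| < ∞, where |x| denotes the distance from x to 0 in 𝕋^d. Let φ be a continuously differentiable real function on 𝕋^d, and for a finite signed measure ν on 𝕋^d define Ψ(ν) := ∬_{𝕋^d × 𝕋^d} φ(x) K(x−y) dν(x) dν(y) ∈ ℝ^d in case (i), and Ψ(ν) := (1/2) ∬_{𝕋^d × 𝕋^d} (φ(x) − φ(y)) K(x−y) dν(x) dν(y) ∈ ℝ^d in case (ii). Then there exists a constant C > 0, depending only on d, on φ, and on ‖K‖_{L^∞} in case (i), respectively sup_x |x||K(x)| in case (ii), such that for every integer N ≥ 2, every probability measure ρ̄ on 𝕋^d, and every probability measure ρ_N on (𝕋^d)^N with H(ρ_N | ρ̄^{⊗N}) < ∞: ∫_{(𝕋^d)^N} | Ψ(μ_N − ρ̄) | dρ_N ≤ (C/N) ( H(ρ_N | ρ̄^{⊗N}) + 1 ), where μ_N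 = (1/N) Σ_{i=1}^N δ_{x_i} is the empirical measure of (x_1,…,x_N) and |·| is the Euclidean norm on ℝ^d. -/
open MeasureTheory Classical

/-- The `d`-dimensional torus `𝕋^d = (ℝ/2πℤ)^d`. -/
abbrev Torus (d : ℕ) := Fin d → AddCircle (2 * Real.pi)

/-- The relative entropy `H(μ|ν) := ∫ (dμ/dν) log(dμ/dν) dν` if `μ ≪ ν` (and the integrand
is integrable; otherwise `+∞`), with values in the extended reals. -/
noncomputable def relEntropy {E : Type*} [MeasurableSpace E] (μ ν : Measure E) : EReal :=
  if μ ≪ ν ∧ Integrable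
      (fun x => (μ.rnDeriv ν x).toReal * Real.log (μ.rnDeriv ν x).toReal) ν
  then ((∫ x, (μ.rnDeriv ν x).toReal * Real.log (μ.rnDeriv ν x).toReal ∂ν : ℝ) : EReal)
  else ⊤

/-- The empirical measure `μ_N = N⁻¹ ∑_{i=1}^N δ_{x_i}` of a configuration
`x ∈ (𝕋^d)^N`. -/
noncomputable def empiricalMeasure (d N : ℕ) (x : Fin N → Torus d) : Measure (Torus d) :=
  (N : ENNReal)⁻¹ • ∑ i, Measure.dirac (x i)

/-- Case (i) bilinear pairing: `Ψ(μ₁,μ₂) = ∬ φ(x) K(x−y) dμ₁(x) dμ₂(y) ∈ ℝ^d`. -/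
noncomputable def psiBil₁ (d : ℕ) (K : Torus d → EuclideanSpace ℝ (Fin d))
    (φ : Torus d → ℝ) (μ₁ μ₂ : Measure (Torus d)) : EuclideanSpace ℝ (Fin d) :=
  ∫ x, ∫ y, φ x • K (x - y) ∂μ₂ ∂μ₁

/-- Case (ii) (symmetrized) bilinear pairing:
`Ψ(μ₁,μ₂) = (1/2) ∬ (φ(x) − φ(y)) K(x−y) dμ₁(x) dμ₂(y) ∈ ℝ^d`. -/
noncomputable def psiBil₂ (d : ℕ) (K : Torus d → EuclideanSpace ℝ (Fin d))
    (φ : Torus d → ℝ) (μ₁ μ₂ : Measure (Torus d)) : EuclideanSpace ℝ (Fin d) :=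
  ∫ x, ∫ y, ((2 : ℝ)⁻¹ * (φ x - φ y)) • K (x - y) ∂μ₂ ∂μ₁

/-- The value `Ψ(μ − ρ)` of the quadratic form associated to a bilinear pairing `Ψ`,
expanded bilinearly: `Ψ(μ−ρ) = Ψ(μ,μ) − Ψ(μ,ρ) − Ψ(ρ,μ) + Ψ(ρ,ρ)`. -/
noncomputable def psiDiff (d : ℕ)
    (Ψ : Measure (Torus d) → Measure (Torus d) → EuclideanSpace ℝ (Fin d))
    (μ ρ : Measure (Torus d)) : EuclideanSpace ℝ (Fin d) :=
  Ψ μ μ - Ψ μ ρ - Ψ ρ μ + Ψ ρ ρ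

namespace S9
open ProbabilityTheory

lemma int_bdd {X : Type*} [MeasurableSpace X] {μ : Measure X} [IsFiniteMeasure μ] {f : X → ℝ}
    (hf : Measurable f) (C : ℝ) (h : ∀ x, |f x| ≤ C) : Integrable f μ :=
  Integrable.of_bound hf.aestronglyMeasurable C (Filter.Eventually.of_forall h)

lemma int_exp_bdd {X : Type*} [MeasurableSpace X] {μ : Measure X} [IsFiniteMeasure μ] {f : X → ℝ}
    (hf : Measurable f) (C : ℝ) (h : ∀ x, |f x| ≤ C) : Integrable (fun x => Real.exp (f x)) μ :=
  int_bdd hf.exp (Real.exp C) (fun x => by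
    rw [abs_of_pos (Real.exp_pos _)]
    exact Real.exp_le_exp.2 ((le_abs_self _).trans (h x)))

lemma young (a t : ℝ) (ha : 0 ≤ a) : a * t ≤ a * Real.log a - a + Real.exp t := by
  rcases ha.eq_or_lt with rfl | ha
  · simp; positivity
  · have h := Real.add_one_le_exp (t - Real.log a)
    rw [Real.exp_sub, Real.exp_log ha] at h
    have h2 := mul_le_mul_of_nonneg_left h ha.le
    rw [mul_div_cancel₀ _ ha.ne'] at h2
    linarith

lemma entropy_ineq {E : Type*} [MeasurableSpace E] (μ ν : Measure E) [IsProbabilityMeasure μ]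
    [IsProbabilityMeasure ν] (hac : μ ≪ ν)
    (hint : Integrable
      (fun x => (μ.rnDeriv ν x).toReal * Real.log (μ.rnDeriv ν x).toReal) ν)
    (F : E → ℝ) (hF : Measurable F) (b : ℝ) (hb : ∀ x, |F x| ≤ b) :
    ∫ x, F x ∂μ ≤ ∫ x, (μ.rnDeriv ν x).toReal * Real.log (μ.rnDeriv ν x).toReal ∂ν
      + ∫ x, Real.exp (F x) ∂ν - 1 := by
  have h1 : ∫ x, F x ∂μ = ∫ x, (μ.rnDeriv ν x).toReal * F x ∂ν := by
    rw [← integral_rnDeriv_smul hac]; rfl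
  have hI : Integrable (fun x => (μ.rnDeriv ν x).toReal * F x) ν :=
    (integrable_rnDeriv_smul_iff hac).2 (int_bdd hF b hb)
  have hr : Integrable (fun x => (μ.rnDeriv ν x).toReal) ν := Measure.integrable_toReal_rnDeriv
  have hr1 : ∫ x, (μ.rnDeriv ν x).toReal ∂ν = 1 := by
    rw [Measure.integral_toReal_rnDeriv hac]; simp
  have hE := int_exp_bdd (μ := ν) hF b hb
  rw [h1]
  calc _ ≤ ∫ x, ((μ.rnDeriv ν x).toReal * Real.log (μ.rnDeriv ν x).toReal
      - (μ.rnDeriv ν x).toReal + Real.exp (F x)) ∂ν :=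
        integral_mono hI ((hint.sub hr).add hE) (fun x => young _ _ ENNReal.toReal_nonneg)
    _ = _ := by
      have hs := hint.sub hr
      rw [integral_add (f := fun x => (μ.rnDeriv ν x).toReal * Real.log (μ.rnDeriv ν x).toReal
        - (μ.rnDeriv ν x).toReal) hs hE, integral_sub hint hr, hr1]; ring

noncomputable def C0 : ℝ := ∫ g, Real.exp (g ^ 2 / 4) ∂(gaussianReal 0 1)

lemma integrable_C0 : Integrable (fun g : ℝ => Real.exp (g ^ 2 / 4)) (gaussianReal 0 1) := by
  rw [gaussianReal_of_var_ne_zero _ one_ne_zero]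
  rw [integrable_withDensity_iff_integrable_smul' (measurable_gaussianPDF 0 1)
    (Filter.Eventually.of_forall fun _ => gaussianPDF_lt_top)]
  have h := (integrable_exp_neg_mul_sq (b := 1/4) (by norm_num)).const_mul
    ((√(2 * Real.pi * (1 : NNReal)))⁻¹)
  refine h.congr (Filter.Eventually.of_forall fun x => ?_)
  simp only [toReal_gaussianPDF, gaussianPDFReal, smul_eq_mul]
  rw [mul_assoc _ (Real.exp _) (Real.exp _), ← Real.exp_add]
  congr 2
  push_cast
  ring

lemma gauss_mgf (s : ℝ) : ∫ g, Real.exp (s * g) ∂(gaussianReal 0 1) = Real.exp (s ^ 2 / 2) := by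
  have := mgf_gaussianReal (p := gaussianReal 0 1) (X := id) (μ := 0) (v := 1) (by simp) s
  simpa [mgf] using this

lemma exp_mul_sum_pi {X J : Type*} [MeasurableSpace X] [Fintype J] (ρ : Measure X)
    [IsProbabilityMeasure ρ] (u : X → ℝ) :
    ∫ y : J → X, Real.exp (∑ j, u (y j)) ∂(Measure.pi fun _ => ρ)
      = (∫ x, Real.exp (u x) ∂ρ) ^ (Fintype.card J) := by
  simp_rw [Real.exp_sum]
  rw [integral_fintype_prod_eq_prod (fun _ x => Real.exp (u x))]
  simp

lemma hoeff {X : Type*} [MeasurableSpace X] (ρ : Measure X)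
    [IsProbabilityMeasure ρ] (u : X → ℝ) (hu : Measurable u) (hb : ∀ x, |u x| ≤ 1/2)
    (h0 : ∫ x, u x ∂ρ = 0) (t : ℝ) : ∫ x, Real.exp (t * u x) ∂ρ ≤ Real.exp (t ^ 2 / 8) := by
  have := (hasSubgaussianMGF_of_mem_Icc_of_integral_eq_zero (μ := ρ) (X := u) (a := -(1/2))
    (b := 1/2) hu.aemeasurable (Filter.Eventually.of_forall fun x => abs_le.1 (hb x)) h0).mgf_le t
  rw [mgf] at this
  refine this.trans (le_of_eq ?_)
  congr 1
  have : (‖(1/2 : ℝ) - -(1/2)‖₊ : NNReal) = 1 := by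
    norm_num
  rw [this]; push_cast; ring

lemma sq_exp {X J : Type*} [MeasurableSpace X] [Fintype J] (ρ : Measure X)
    [IsProbabilityMeasure ρ] (u : X → ℝ) (hu : Measurable u) (hb : ∀ x, |u x| ≤ 1/2)
    (h0 : ∫ x, u x ∂ρ = 0) (N : ℕ) (hN : 0 < N) (hJ : Fintype.card J ≤ N) :
    ∫ y : J → X, Real.exp ((N : ℝ)⁻¹ * (∑ j, u (y j)) ^ 2) ∂(Measure.pi fun _ => ρ) ≤ C0 := by
  have hN' : (0:ℝ) < N := by exact_mod_cast hN
  set t : ℝ := √(2 / N) with ht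
  have ht2 : t ^ 2 = 2 / N := Real.sq_sqrt (by positivity)
  have ht0 : 0 ≤ t := Real.sqrt_nonneg _
  have hS : ∀ y : J → X, |t * ∑ j, u (y j)| ≤ t * Fintype.card J := fun y => by
    rw [abs_mul, abs_of_nonneg ht0]
    gcongr
    refine (Finset.abs_sum_le_sum_abs _ _).trans ?_
    refine (Finset.sum_le_card_nsmul _ _ 1 fun j _ => (hb _).trans (by norm_num)).trans ?_
    simp
  set b := t * Fintype.card J
  have hSm : Measurable (fun y : J → X => t * ∑ j, u (y j)) := by fun_prop
  have e1 : ∀ y : J → X, Real.exp ((N : ℝ)⁻¹ * (∑ j, u (y j)) ^ 2)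
      = ∫ g, Real.exp ((t * ∑ j, u (y j)) * g) ∂(gaussianReal 0 1) := fun y => by
    rw [gauss_mgf, mul_pow, ht2]; congr 1; field_simp
  simp_rw [e1]
  have hint : Integrable (Function.uncurry fun (y : J → X) (g : ℝ) =>
      Real.exp ((t * ∑ j, u (y j)) * g)) ((Measure.pi fun _ => ρ).prod (gaussianReal 0 1)) := by
    have hd : Integrable (fun g : ℝ => Real.exp (b * g) + Real.exp (-b * g)) (gaussianReal 0 1) :=
      (integrable_exp_mul_gaussianReal b).add (integrable_exp_mul_gaussianReal (-b))
    refine (hd.comp_snd (Measure.pi fun _ : J => ρ)).mono' ?_ ?_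
    · apply Measurable.aestronglyMeasurable
      unfold Function.uncurry
      exact ((hSm.comp measurable_fst).mul measurable_snd).exp
    · refine Filter.Eventually.of_forall fun p => ?_
      rw [Real.norm_eq_abs, Function.uncurry, abs_of_pos (Real.exp_pos _)]
      have h1 := abs_le.1 (hS p.1)
      rcases le_total 0 p.2 with h | h
      · have : Real.exp ((t * ∑ j, u (p.1 j)) * p.2) ≤ Real.exp (b * p.2) :=
          Real.exp_le_exp.2 (mul_le_mul_of_nonneg_right h1.2 h)
        have := Real.exp_pos (-b * p.2)
        linarith
      · have : Real.exp ((t * ∑ j, u (p.1 j)) * p.2) ≤ Real.exp (-b * p.2) :=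
          Real.exp_le_exp.2 (mul_le_mul_of_nonpos_right h1.1 h)
        have := Real.exp_pos (b * p.2)
        linarith
  rw [integral_integral_swap hint]
  refine integral_mono hint.integral_prod_right integrable_C0 fun g => ?_
  have e2 : ∀ y : J → X, (t * ∑ j, u (y j)) * g = ∑ j, (t * g) * u (y j) := fun y => by
    rw [← Finset.mul_sum]; ring
  simp only [e2]
  rw [exp_mul_sum_pi ρ (fun x => (t * g) * u x)]
  refine (pow_le_pow_left₀ (integral_nonneg fun x => (Real.exp_pos _).le)
    (hoeff ρ u hu hb h0 (t * g)) _).trans ?_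
  rw [← Real.exp_nat_mul, Real.exp_le_exp, mul_pow, ht2]
  have : (Fintype.card J : ℝ) ≤ N := by exact_mod_cast hJ
  calc (Fintype.card J : ℝ) * (2 / N * g ^ 2 / 8) ≤ N * (2 / N * g ^ 2 / 8) := by gcongr
    _ = g ^ 2 / 4 := by field_simp; ring

lemma hmc {X Y : Type*} [MeasurableSpace X] [MeasurableSpace Y] {h : X → X → ℝ}
    (hm : Measurable (Function.uncurry h)) {a b : Y → X} (ha : Measurable a) (hb : Measurable b) :
    Measurable fun z => h (a z) (b z) := hm.comp (ha.prodMk hb)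

lemma bil_exp {X I J : Type*} [MeasurableSpace X] [Fintype I] [Fintype J] (ρ : Measure X)
    [IsProbabilityMeasure ρ] (h : X → X → ℝ) (hm : Measurable (Function.uncurry h))
    (hb : ∀ x y, |h x y| ≤ 1/2) (h1 : ∀ y, ∫ x, h x y ∂ρ = 0) (h2 : ∀ x, ∫ y, h x y ∂ρ = 0)
    (N : ℕ) (hN : 0 < N) (hI : Fintype.card I ≤ N) (hJ : Fintype.card J ≤ N) :
    ∫ p : (I → X) × (J → X), Real.exp ((N : ℝ)⁻¹ * ∑ i, ∑ j, h (p.1 i) (p.2 j))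
      ∂((Measure.pi fun _ => ρ).prod (Measure.pi fun _ => ρ)) ≤ C0 := by
  have hN' : (0:ℝ) < N := by exact_mod_cast hN
  have hfb : ∀ x (y : J → X), |(N : ℝ)⁻¹ * ∑ j, h x (y j)| ≤ 1/2 := fun x y => by
    rw [abs_mul, abs_of_pos (inv_pos.2 hN'), inv_mul_le_iff₀ hN']
    refine (Finset.abs_sum_le_sum_abs _ _).trans ?_
    refine (Finset.sum_le_card_nsmul _ _ (1/2) fun j _ => hb _ _).trans ?_
    have : (Fintype.card J : ℝ) ≤ N := by exact_mod_cast hJ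
    rw [nsmul_eq_mul]
    simp only [Finset.card_univ]
    gcongr
  have hfm : Measurable fun q : X × (J → X) => (N : ℝ)⁻¹ * ∑ j, h q.1 (q.2 j) := by
    refine measurable_const.mul (Finset.measurable_sum _ fun j _ => hmc hm measurable_fst ?_)
    fun_prop
  have hSm : Measurable fun p : (I → X) × (J → X) => (N : ℝ)⁻¹ * ∑ i, ∑ j, h (p.1 i) (p.2 j) := by
    refine measurable_const.mul (Finset.measurable_sum _ fun i _ =>
      Finset.measurable_sum _ fun j _ => hmc hm ?_ ?_) <;> fun_prop
  have eS : ∀ p : (I → X) × (J → X), (N : ℝ)⁻¹ * ∑ i, ∑ j, h (p.1 i) (p.2 j)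
      = ∑ i, (N : ℝ)⁻¹ * ∑ j, h (p.1 i) (p.2 j) := fun p => Finset.mul_sum _ _ _
  have hSb : ∀ p : (I → X) × (J → X), |(N : ℝ)⁻¹ * ∑ i, ∑ j, h (p.1 i) (p.2 j)|
      ≤ Fintype.card I * (1/2) := fun p => by
    rw [eS]
    refine (Finset.abs_sum_le_sum_abs _ _).trans ?_
    refine (Finset.sum_le_card_nsmul _ _ (1/2) fun j _ => hfb _ _).trans ?_
    simp
  rw [integral_prod_symm _ (int_exp_bdd hSm _ hSb)]
  have hqb : ∀ q : X × (J → X), |(N : ℝ)⁻¹ * (∑ j, h q.1 (q.2 j)) ^ 2| ≤ N := fun q => by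
    have e : (N : ℝ)⁻¹ * (∑ j, h q.1 (q.2 j)) ^ 2 = N * ((N : ℝ)⁻¹ * ∑ j, h q.1 (q.2 j)) ^ 2 := by
      field_simp
    rw [e, abs_mul, abs_of_pos hN', abs_pow]
    have : |(N : ℝ)⁻¹ * ∑ j, h q.1 (q.2 j)| ^ 2 ≤ 1 :=
      pow_le_one₀ (abs_nonneg _) ((hfb _ _).trans (by norm_num))
    nlinarith
  have hqm : Measurable fun q : X × (J → X) => (N : ℝ)⁻¹ * (∑ j, h q.1 (q.2 j)) ^ 2 := by
    refine measurable_const.mul ((Finset.measurable_sum _ fun j _ => hmc hm measurable_fst ?_).pow_const 2)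
    fun_prop
  have hqi : Integrable (fun q : X × (J → X) => Real.exp ((N : ℝ)⁻¹ * (∑ j, h q.1 (q.2 j)) ^ 2))
    (ρ.prod (Measure.pi fun _ => ρ)) := int_exp_bdd hqm _ hqb
  have key : ∀ y : J → X, ∫ x : I → X, Real.exp ((N : ℝ)⁻¹ * ∑ i, ∑ j, h (x i) (y j))
      ∂(Measure.pi fun _ => ρ) ≤ ∫ x, Real.exp ((N : ℝ)⁻¹ * (∑ j, h x (y j)) ^ 2) ∂ρ := fun y => by
    set f : X → ℝ := fun x => (N : ℝ)⁻¹ * ∑ j, h x (y j) with hf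
    have fm : Measurable f := hfm.comp (measurable_id.prodMk measurable_const)
    have fb : ∀ x, |f x| ≤ 1/2 := fun x => hfb x y
    have f0 : ∫ x, f x ∂ρ = 0 := by
      rw [hf, integral_const_mul, integral_finsetSum (f := fun j x => h x (y j)) _ fun j _ =>
        int_bdd (hmc hm measurable_id measurable_const) (1/2) fun x => hb _ _]
      simp [h1]
    have fi : Integrable f ρ := int_bdd fm _ fb
    have fb2 : ∀ x, |f x ^ 2| ≤ 1 := fun x => by
      rw [abs_pow]; exact pow_le_one₀ (abs_nonneg _) ((fb x).trans (by norm_num))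
    have fi2 : Integrable (fun x => f x ^ 2) ρ := int_bdd (fm.pow_const 2) _ fb2
    have e1 : ∀ x : I → X, (N : ℝ)⁻¹ * ∑ i, ∑ j, h (x i) (y j) = ∑ i, f (x i) :=
      fun x => eS (x, y)
    simp only [e1]
    rw [exp_mul_sum_pi ρ f]
    have s1 : ∫ x, Real.exp (f x) ∂ρ ≤ Real.exp (∫ x, f x ^ 2 ∂ρ) := by
      calc ∫ x, Real.exp (f x) ∂ρ ≤ ∫ x, (1 + f x + f x ^ 2) ∂ρ := by
            refine integral_mono (int_exp_bdd fm _ fb)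
              (((integrable_const 1).add fi).add fi2) fun x => ?_
            have := (abs_le.1 (Real.abs_exp_sub_one_sub_id_le ((fb x).trans (by norm_num)))).2
            simp only; linarith
        _ = 1 + ∫ x, f x ^ 2 ∂ρ := by
            rw [integral_add (f := fun x => 1 + f x) ((integrable_const 1).add fi) fi2, integral_add (integrable_const 1) fi, f0]
            simp
        _ ≤ _ := by linarith [Real.add_one_le_exp (∫ x, f x ^ 2 ∂ρ)]
    refine (pow_le_pow_left₀ (integral_nonneg fun x => (Real.exp_pos _).le) s1 _).trans ?_
    rw [← Real.exp_nat_mul]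
    have hI' : (Fintype.card I : ℝ) ≤ N := by exact_mod_cast hI
    have n0 : 0 ≤ ∫ x, f x ^ 2 ∂ρ := integral_nonneg fun x => sq_nonneg _
    have e3 : ∀ x, (N : ℝ)⁻¹ * (∑ j, h x (y j)) ^ 2 = N * f x ^ 2 := fun x => by
      rw [hf]; field_simp
    simp only [e3]
    calc _ ≤ Real.exp (∫ x, N * f x ^ 2 ∂ρ) := by
          rw [integral_const_mul]; gcongr
      _ ≤ _ := by
        refine ConvexOn.map_integral_le (s := Set.univ) convexOn_exp Real.continuous_exp.continuousOn
          isClosed_univ (by simp) (fi2.const_mul _) ?_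
        refine int_exp_bdd (measurable_const.mul (fm.pow_const 2)) N fun x => ?_
        rw [abs_mul, abs_of_pos hN']
        nlinarith [fb2 x]
  calc _ ≤ ∫ y : J → X, ∫ x, Real.exp ((N : ℝ)⁻¹ * (∑ j, h x (y j)) ^ 2) ∂ρ ∂(Measure.pi fun _ => ρ) :=
        integral_mono (int_exp_bdd hSm _ hSb).integral_prod_right hqi.integral_prod_right key
    _ = ∫ x, ∫ y : J → X, Real.exp ((N : ℝ)⁻¹ * (∑ j, h x (y j)) ^ 2) ∂(Measure.pi fun _ => ρ) ∂ρ :=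
        (integral_integral_swap hqi).symm
    _ ≤ ∫ x, C0 ∂ρ := by
        refine integral_mono hqi.integral_prod_left (integrable_const _) fun x => ?_
        exact sq_exp ρ (h x) (hmc hm measurable_const measurable_id) (hb x) (h2 x) N hN hJ
    _ = C0 := by simp

noncomputable def FF {X : Type*} {N : ℕ} (h : X → X → ℝ) (b : Fin N → Bool) (x : Fin N → X) : ℝ :=
  (N : ℝ)⁻¹ * ∑ i : {i // b i = true}, ∑ j : {j // ¬ b j = true}, h (x i) (x j)

lemma FF_exp {X : Type*} [MeasurableSpace X] (ρ : Measure X)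
    [IsProbabilityMeasure ρ] (h : X → X → ℝ) (hm : Measurable (Function.uncurry h))
    (hb : ∀ x y, |h x y| ≤ 1/2) (h1 : ∀ y, ∫ x, h x y ∂ρ = 0) (h2 : ∀ x, ∫ y, h x y ∂ρ = 0)
    (N : ℕ) (hN : 0 < N) (b : Fin N → Bool) :
    ∫ x, Real.exp (FF h b x) ∂(Measure.pi fun _ => ρ) ≤ C0 := by
  have := (measurePreserving_piEquivPiSubtypeProd (fun _ : Fin N => ρ)
    (fun i => b i = true)).integral_comp' (fun p => Real.exp ((N : ℝ)⁻¹ *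
      ∑ i, ∑ j, h (p.1 i) (p.2 j)))
  have hc : ∀ (p : Fin N → Prop) [DecidablePred p], Fintype.card {i // p i} ≤ N := fun p _ =>
    (Fintype.card_subtype_le p).trans (by simp)
  refine (le_of_eq this).trans (bil_exp ρ h hm hb h1 h2 N hN (hc _) (hc _))

lemma FF_meas {X : Type*} [MeasurableSpace X] (h : X → X → ℝ)
    (hm : Measurable (Function.uncurry h)) (N : ℕ) (b : Fin N → Bool) :
    Measurable (FF h b) := by
  refine measurable_const.mul (Finset.measurable_sum _ fun i _ =>
      Finset.measurable_sum _ fun j _ => hmc hm ?_ ?_) <;> fun_prop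

lemma FF_eq {X : Type*} {N : ℕ} (h : X → X → ℝ) (b : Fin N → Bool) (x : Fin N → X) :
    FF h b x = (N : ℝ)⁻¹ * ∑ i, ∑ j, if b i = true ∧ ¬ b j = true then h (x i) (x j) else 0 := by
  unfold FF
  congr 1
  have h1 : ∀ i, ∑ j : {j // ¬ b j = true}, h (x i) (x j)
      = ∑ j, if ¬ b j = true then h (x i) (x j) else 0 := fun i => by
    rw [← Finset.sum_filter]
    exact (Finset.sum_subtype _ (by simp) (fun j => h (x i) (x j))).symm
  simp only [h1]
  rw [← Finset.sum_subtype (Finset.univ.filter fun i => b i = true) (p := fun i => b i = true)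
    (by simp) (fun i => ∑ j, if ¬ b j = true then h (x i) (x j) else 0), Finset.sum_filter]
  refine Finset.sum_congr rfl fun i _ => ?_
  by_cases hi : b i = true <;> simp [hi]

lemma FF_bdd {X : Type*} {N : ℕ} (h : X → X → ℝ) (hb : ∀ x y, |h x y| ≤ 1/2)
    (b : Fin N → Bool) (x : Fin N → X) : |FF h b x| ≤ (N:ℝ)⁻¹ * (N * (N * (1/2))) := by
  rw [FF_eq, abs_mul, abs_of_nonneg (by positivity : (0:ℝ) ≤ (N:ℝ)⁻¹)]
  gcongr
  refine (Finset.abs_sum_le_sum_abs _ _).trans ((Finset.sum_le_card_nsmul _ _ ((N:ℝ) * (1/2)) ?_).trans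
    (by simp))
  intro i _
  refine (Finset.abs_sum_le_sum_abs _ _).trans ((Finset.sum_le_card_nsmul _ _ (1/2) ?_).trans
    (by simp))
  intro j _
  split_ifs
  · exact hb _ _
  · norm_num

lemma count {N : ℕ} (i j : Fin N) (hij : i ≠ j) :
    4 * (Finset.univ.filter fun b : Fin N → Bool => b i = true ∧ ¬ b j = true).card = 2 ^ N := by
  have e : (Finset.univ.filter fun b : Fin N → Bool => b i = true ∧ ¬ b j = true)
      = Fintype.piFinset (fun k => if k = i then {true} else if k = j then {false} else Finset.univ) := by
    ext b
    simp only [Finset.mem_filter, Finset.mem_univ, true_and, Fintype.mem_piFinset]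
    constructor
    · rintro ⟨h1, h2⟩ k
      split_ifs with h3 h4
      · subst h3; simpa using h1
      · subst h4; simpa using h2
      · simp
    · intro h
      have a := h i
      have c := h j
      simp [hij.symm] at a c
      simp [a, c]
  rw [e, Fintype.card_piFinset]
  have f4 : (4:ℕ) = ∏ k : Fin N, ((if k = i then 2 else 1) * (if k = j then 2 else 1)) := by
    rw [Finset.prod_mul_distrib]; simp
  rw [f4, ← Finset.prod_mul_distrib]
  have : ∀ k : Fin N, ((if k = i then 2 else 1) * (if k = j then 2 else 1)) *
      (if k = i then {true} else if k = j then {false} else Finset.univ : Finset Bool).card = 2 := by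
    intro k
    by_cases h1 : k = i
    · subst h1; simp [hij]
    · by_cases h2 : k = j
      · subst h2; simp [h1]
      · simp [h1, h2]
  rw [Finset.prod_congr rfl fun k _ => this k]
  simp

lemma sum_FF {X : Type*} {N : ℕ} (h : X → X → ℝ) (x : Fin N → X) :
    (N:ℝ)⁻¹ * ∑ i, ∑ j, h (x i) (x j) = (N:ℝ)⁻¹ * ∑ i, h (x i) (x i)
      + 4 / 2 ^ N * ∑ b : Fin N → Bool, FF h b x := by
  have e1 : ∑ b : Fin N → Bool, FF h b x = (N:ℝ)⁻¹ * ∑ i, ∑ j,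
      if i = j then 0 else (2 ^ N / 4) * h (x i) (x j) := by
    simp only [FF_eq]
    rw [← Finset.mul_sum, Finset.sum_comm]
    congr 1
    refine Finset.sum_congr rfl fun i _ => ?_
    rw [Finset.sum_comm]
    refine Finset.sum_congr rfl fun j _ => ?_
    split_ifs with hij
    · subst hij; simp
    · rw [← Finset.sum_filter, Finset.sum_const, nsmul_eq_mul]
      have := count i j hij
      have h' : (4:ℝ) * ((Finset.univ.filter fun b : Fin N → Bool => b i = true ∧ ¬ b j = true).card : ℝ)
        = 2 ^ N := by exact_mod_cast this
      rw [← h']; ring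
  rw [e1, mul_left_comm, ← mul_add]
  congr 1
  rw [Finset.mul_sum, ← Finset.sum_add_distrib]
  refine Finset.sum_congr rfl fun i _ => ?_
  rw [← Finset.add_sum_erase _ _ (Finset.mem_univ i)]
  congr 1
  rw [← Finset.add_sum_erase _ (fun j => if i = j then (0:ℝ) else _) (Finset.mem_univ i)]
  simp only [if_true, zero_add]
  rw [Finset.mul_sum]
  refine Finset.sum_congr rfl fun j hj => ?_
  have : i ≠ j := (Finset.ne_of_mem_erase hj).symm
  rw [if_neg this]
  field_simp

lemma C0_nonneg : 0 ≤ C0 := integral_nonneg fun _ => (Real.exp_pos _).le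

lemma degen {X : Type*} [MeasurableSpace X] (ρ : Measure X)
    [IsProbabilityMeasure ρ] (h : X → X → ℝ) (hm : Measurable (Function.uncurry h))
    (hb : ∀ x y, |h x y| ≤ 1/2) (h1 : ∀ y, ∫ x, h x y ∂ρ = 0) (h2 : ∀ x, ∫ y, h x y ∂ρ = 0)
    (N : ℕ) (hN : 0 < N) (ρN : Measure (Fin N → X)) [IsProbabilityMeasure ρN]
    (hac : ρN ≪ Measure.pi fun _ => ρ)
    (hint : Integrable (fun x => (ρN.rnDeriv (Measure.pi fun _ => ρ) x).toReal *
      Real.log (ρN.rnDeriv (Measure.pi fun _ => ρ) x).toReal) (Measure.pi fun _ => ρ)) :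
    ∫ x, |(N:ℝ)⁻¹ * ∑ i, ∑ j, h (x i) (x j)| ∂ρN ≤ (8 * C0 + 4) *
      (∫ x, (ρN.rnDeriv (Measure.pi fun _ => ρ) x).toReal *
      Real.log (ρN.rnDeriv (Measure.pi fun _ => ρ) x).toReal ∂(Measure.pi fun _ => ρ) + 1) := by
  set H := ∫ x, (ρN.rnDeriv (Measure.pi fun _ => ρ) x).toReal *
      Real.log (ρN.rnDeriv (Measure.pi fun _ => ρ) x).toReal ∂(Measure.pi fun _ => ρ) with hH
  have hN' : (0:ℝ) < N := by exact_mod_cast hN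
  have H0 : 0 ≤ H := by
    have := entropy_ineq ρN _ hac hint (fun _ => 0) measurable_const 0 (by simp)
    simpa using this
  have C := C0_nonneg
  have hF : ∀ b : Fin N → Bool, ∫ x, |FF h b x| ∂ρN ≤ H + 2 * C0 - 1 := fun b => by
    have m := FF_meas h hm N b
    have bd := FF_bdd h hb b
    refine (entropy_ineq ρN _ hac hint (fun x => |FF h b x|) (by fun_prop) _
      (fun x => by rw [abs_abs]; exact bd x)).trans ?_
    have i1 := FF_exp ρ h hm hb h1 h2 N hN b
    have i2 := FF_exp ρ (fun x y => - h x y) hm.neg (by simpa using hb)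
      (by simpa [integral_neg] using h1) (by simpa [integral_neg] using h2) N hN b
    have en : ∀ x, FF (fun x y => - h x y) b x = - FF h b x := fun x => by simp [FF]
    simp only [en] at i2
    have : ∫ x, Real.exp |FF h b x| ∂(Measure.pi fun _ => ρ) ≤
        ∫ x, (Real.exp (FF h b x) + Real.exp (- FF h b x)) ∂(Measure.pi fun _ => ρ) := by
      refine integral_mono (int_exp_bdd (by fun_prop) _ (fun x => by rw [abs_abs]; exact bd x))
        ((int_exp_bdd m _ bd).add (int_exp_bdd m.neg _ (fun x => by
          simpa only [Pi.neg_apply, abs_neg] using bd x))) fun x => ?_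
      rcases abs_cases (FF h b x) with ⟨e, _⟩ | ⟨e, _⟩
      · simp only [e]; linarith [Real.exp_pos (- FF h b x)]
      · simp only [e]; linarith [Real.exp_pos (FF h b x)]
    rw [integral_add (g := fun x => Real.exp (-FF h b x)) (int_exp_bdd m _ bd) (int_exp_bdd m.neg _ (fun x => by
          simpa only [Pi.neg_apply, abs_neg] using bd x))] at this
    linarith
  have iF : ∀ b : Fin N → Bool, Integrable (fun x => |FF h b x|) ρN := fun b =>
    (int_bdd (FF_meas h hm N b) _ (FF_bdd h hb b)).abs
  have pt : ∀ x : Fin N → X, |(N:ℝ)⁻¹ * ∑ i, ∑ j, h (x i) (x j)| ≤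
      1 / 2 + 4 / 2 ^ N * ∑ b : Fin N → Bool, |FF h b x| := fun x => by
    rw [sum_FF]
    refine (abs_add_le _ _).trans (add_le_add ?_ ?_)
    · rw [abs_mul, abs_of_pos (inv_pos.2 hN'), inv_mul_le_iff₀ hN']
      exact (Finset.abs_sum_le_sum_abs _ _).trans ((Finset.sum_le_card_nsmul _ _ (1/2)
        (fun i _ => hb _ _)).trans (by simp))
    · rw [abs_mul, abs_of_pos (by positivity)]
      gcongr
      exact Finset.abs_sum_le_sum_abs _ _
  have iS : Integrable (fun x => ∑ b : Fin N → Bool, |FF h b x|) ρN :=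
    integrable_finsetSum _ fun b _ => iF b
  calc _ ≤ ∫ x, (1 / 2 + 4 / 2 ^ N * ∑ b : Fin N → Bool, |FF h b x|) ∂ρN :=
        integral_mono_of_nonneg (Filter.Eventually.of_forall fun x => abs_nonneg _)
          ((integrable_const _).add (iS.const_mul _)) (Filter.Eventually.of_forall pt)
    _ = 1 / 2 + 4 / 2 ^ N * ∑ b : Fin N → Bool, ∫ x, |FF h b x| ∂ρN := by
        rw [integral_add (integrable_const _) (iS.const_mul _), integral_const_mul,
          integral_finsetSum _ fun b _ => iF b]
        simp
    _ ≤ 1 / 2 + 4 / 2 ^ N * ∑ b : Fin N → Bool, (H + 2 * C0 - 1) := by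
        gcongr with b
        exact hF b
    _ = 1 / 2 + 4 * (H + 2 * C0 - 1) := by
        simp only [Finset.sum_const, Finset.card_univ, Fintype.card_fun, Fintype.card_bool,
          Fintype.card_fin, nsmul_eq_mul]
        push_cast
        field_simp
    _ ≤ _ := by nlinarith

lemma scalar {X : Type*} [MeasurableSpace X] (ρ : Measure X)
    [IsProbabilityMeasure ρ] (g : X → X → ℝ) (hm : Measurable (Function.uncurry g))
    (M : ℝ) (hM : 0 < M) (hb : ∀ x y, |g x y| ≤ M)
    (N : ℕ) (hN : 0 < N) (ρN : Measure (Fin N → X)) [IsProbabilityMeasure ρN]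
    (hac : ρN ≪ Measure.pi fun _ => ρ)
    (hint : Integrable (fun x => (ρN.rnDeriv (Measure.pi fun _ => ρ) x).toReal *
      Real.log (ρN.rnDeriv (Measure.pi fun _ => ρ) x).toReal) (Measure.pi fun _ => ρ))
    (D : (Fin N → X) → ℝ)
    (hD : ∀ x, D x = (N:ℝ)⁻¹ * ∑ i, (N:ℝ)⁻¹ * ∑ j, g (x i) (x j)
      - (N:ℝ)⁻¹ * ∑ i, ∫ y, g (x i) y ∂ρ - ∫ z, (N:ℝ)⁻¹ * ∑ j, g z (x j) ∂ρ
      + ∫ z, ∫ y, g z y ∂ρ ∂ρ) :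
    Integrable D ρN ∧ ∫ x, |D x| ∂ρN ≤ (8 * M * (8 * C0 + 4)) / N *
      (∫ x, (ρN.rnDeriv (Measure.pi fun _ => ρ) x).toReal *
      Real.log (ρN.rnDeriv (Measure.pi fun _ => ρ) x).toReal ∂(Measure.pi fun _ => ρ) + 1) := by
  have hN' : (0:ℝ) < N := by exact_mod_cast hN
  have mA : Measurable fun x => ∫ y, g x y ∂ρ :=
    (hm.stronglyMeasurable.integral_prod_right (ν := ρ)).measurable
  have mB : Measurable fun y => ∫ x, g x y ∂ρ :=
    (hm.stronglyMeasurable.integral_prod_left (μ := ρ)).measurable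
  have i1 : ∀ x, Integrable (fun y => g x y) ρ := fun x =>
    int_bdd (hmc hm measurable_const measurable_id) M (hb x)
  have i2 : ∀ y, Integrable (fun x => g x y) ρ := fun y =>
    int_bdd (hmc hm measurable_id measurable_const) M (fun x => hb x y)
  have bI : ∀ f : X → ℝ, (∀ x, |f x| ≤ M) → |∫ x, f x ∂ρ| ≤ M := fun f hf => by
    have := norm_integral_le_of_norm_le_const (μ := ρ) (f := f) (C := M)
      (Filter.Eventually.of_forall hf)
    simpa using this
  have bA : ∀ x, |∫ y, g x y ∂ρ| ≤ M := fun x => bI _ (hb x)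
  have bB : ∀ y, |∫ x, g x y ∂ρ| ≤ M := fun y => bI _ (fun x => hb x y)
  set A : X → ℝ := fun x => ∫ y, g x y ∂ρ with hA
  set B : X → ℝ := fun y => ∫ x, g x y ∂ρ with hB
  set c : ℝ := ∫ z, ∫ y, g z y ∂ρ ∂ρ with hc
  have bc : |c| ≤ M := bI _ bA
  have iA : Integrable A ρ := int_bdd mA M bA
  have iB : Integrable B ρ := int_bdd mB M bB
  have hcA : ∫ x, A x ∂ρ = c := rfl
  have hcB : ∫ x, B x ∂ρ = c := (integral_integral_swap (int_bdd hm M fun p => hb p.1 p.2)).symm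
  let h : X → X → ℝ := fun x y => (8 * M)⁻¹ * (g x y - A x - B y + c)
  have hhm : Measurable (Function.uncurry h) := by
    have : Measurable fun p : X × X => (8 * M)⁻¹ * (Function.uncurry g p - A p.1 - B p.2 + c) := by
      fun_prop
    exact this
  have hhb : ∀ x y, |h x y| ≤ 1/2 := fun x y => by
    have a1 := abs_le.1 (hb x y)
    have a2 := abs_le.1 (bA x)
    have a3 := abs_le.1 (bB y)
    have a4 := abs_le.1 bc
    have : |g x y - A x - B y + c| ≤ 4 * M := by
      rw [abs_le]; constructor <;> linarith [a1.1, a1.2, a2.1, a2.2, a3.1, a3.2, a4.1, a4.2]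
    simp only [h]
    rw [abs_mul, abs_of_pos (by positivity), inv_mul_le_iff₀ (by positivity)]
    linarith
  have hh1 : ∀ y, ∫ x, h x y ∂ρ = 0 := fun y => by
    simp only [h]
    rw [integral_const_mul, integral_add (f := fun x => g x y - A x - B y)
      (((i2 y).sub iA).sub (integrable_const _)) (integrable_const _),
      integral_sub (f := fun x => g x y - A x) ((i2 y).sub iA) (integrable_const _),
      integral_sub (i2 y) iA, hcA]
    simp [hB]
  have hh2 : ∀ x, ∫ y, h x y ∂ρ = 0 := fun x => by
    simp only [h]
    rw [integral_const_mul, integral_add (f := fun y => g x y - A x - B y)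
      (((i1 x).sub (integrable_const _)).sub iB) (integrable_const _),
      integral_sub (f := fun y => g x y - A x) ((i1 x).sub (integrable_const _)) iB,
      integral_sub (i1 x) (integrable_const _), hcB]
    simp [hA]
  have eD : ∀ x, D x = (8 * M / N) * ((N:ℝ)⁻¹ * ∑ i, ∑ j, h (x i) (x j)) := fun x => by
    rw [hD, integral_const_mul, integral_finsetSum (f := fun j z => g z (x j)) _ fun j _ => i2 (x j)]
    simp only [h, ← Finset.mul_sum, Finset.sum_add_distrib, Finset.sum_sub_distrib,
      Finset.sum_const, Finset.card_univ, Fintype.card_fin, nsmul_eq_mul]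
    change _ - _ * ∑ i, A (x i) - _ * ∑ i, B (x i) + _ = _
    field_simp
  have hd := degen ρ h hhm hhb hh1 hh2 N hN ρN hac hint
  constructor
  · have : D = fun x => (8 * M / N) * ((N:ℝ)⁻¹ * ∑ i, ∑ j, h (x i) (x j)) := funext eD
    rw [this]
    refine ((integrable_finsetSum _ fun i _ => integrable_finsetSum _ fun j _ => ?_).const_mul _).const_mul _
    refine int_bdd (hmc hhm ?_ ?_) (1/2) (fun x => hhb _ _) <;> fun_prop
  · simp only [eD, abs_mul (8 * M / N : ℝ)]
    rw [integral_const_mul, abs_of_pos (by positivity : 0 < 8 * M / N)]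
    calc _ ≤ _ := mul_le_mul_of_nonneg_left hd (by positivity)
      _ = _ := by ring

lemma rep (a : AddCircle (2 * Real.pi)) : ∃ t : ℝ, (t : AddCircle (2 * Real.pi)) = a ∧ |t| = ‖a‖ := by
  obtain ⟨s, rfl⟩ := QuotientAddGroup.mk_surjective a
  refine ⟨s - round ((2 * Real.pi)⁻¹ * s) * (2 * Real.pi), ?_, (AddCircle.norm_eq _).symm⟩
  rw [← zsmul_eq_mul, AddCircle.coe_sub, AddCircle.coe_zsmul, AddCircle.coe_period, smul_zero,
    sub_zero]

lemma rep_pi {d : ℕ} (a : Torus d) : ∃ v : Fin d → ℝ,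
    (fun j => ((v j : ℝ) : AddCircle (2 * Real.pi))) = a ∧ ‖v‖ = ‖a‖ := by
  choose t ht ht' using rep
  refine ⟨fun j => t (a j), funext fun j => ht _, ?_⟩
  rw [Pi.norm_def, Pi.norm_def]
  congr 2
  ext j
  simpa using ht' (a j)

lemma norm_torus {d : ℕ} (a : Torus d) : ‖a‖ ≤ Real.pi := by
  rw [pi_norm_le_iff_of_nonneg Real.pi_pos.le]
  intro j
  have := AddCircle.norm_le_half_period (2 * Real.pi) (x := a j) (by positivity)
  rw [abs_of_pos (by positivity)] at this
  linarith

lemma phi_lip {d : ℕ} (φ : Torus d → ℝ)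
    (hφ : ContDiff ℝ 1 fun v : Fin d → ℝ =>
      φ fun j => ((v j : ℝ) : AddCircle (2 * Real.pi))) :
    ∃ L : NNReal, LipschitzWith L φ := by
  obtain ⟨L, hL⟩ := hφ.contDiffOn.exists_lipschitzOnWith (s := Metric.closedBall 0 (2 * Real.pi))
    one_ne_zero (convex_closedBall _ _) (isCompact_closedBall _ _)
  refine ⟨L, LipschitzWith.of_dist_le_mul fun x y => ?_⟩
  obtain ⟨v, hv, nv⟩ := rep_pi y
  obtain ⟨w, hw, nw⟩ := rep_pi (x - y)
  have p := Real.pi_pos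
  have h1 : v + w ∈ Metric.closedBall (0 : Fin d → ℝ) (2 * Real.pi) := by
    rw [mem_closedBall_zero_iff]
    have := norm_torus y
    have := norm_torus (x - y)
    linarith [norm_add_le v w]
  have h2 : v ∈ Metric.closedBall (0 : Fin d → ℝ) (2 * Real.pi) := by
    rw [mem_closedBall_zero_iff]
    have := norm_torus y
    linarith
  have := hL.dist_le_mul _ h1 _ h2
  have ex : (fun j => (((v + w) j : ℝ) : AddCircle (2 * Real.pi))) = x := by
    have : (fun j => (((v + w) j : ℝ) : AddCircle (2 * Real.pi))) = y + (x - y) := by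
      rw [← hw, ← hv]; ext j; simp
    simpa using this
  rw [ex, hv] at this
  rw [dist_eq_norm (v + w), add_sub_cancel_left, nw, ← dist_eq_norm] at this
  exact this

lemma int_emp {d N : ℕ} (x : Fin N → Torus d) (f : Torus d → EuclideanSpace ℝ (Fin d)) :
    ∫ z, f z ∂(empiricalMeasure d N x) = (N:ℝ)⁻¹ • ∑ i, f (x i) := by
  rw [empiricalMeasure, integral_smul_measure, integral_finsetSum_measure
    (fun i _ => integrable_dirac (by simp))]
  simp

lemma coord {X : Type*} [MeasurableSpace X] {d : ℕ} (ρ : Measure X)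
    (f : X → EuclideanSpace ℝ (Fin d)) (hf : Integrable f ρ) (k : Fin d) :
    (∫ x, f x ∂ρ) k = ∫ x, f x k ∂ρ :=
  ((EuclideanSpace.proj k : EuclideanSpace ℝ (Fin d) →L[ℝ] ℝ).integral_comp_comm hf).symm

lemma combine {d : ℕ} (G : Torus d → Torus d → EuclideanSpace ℝ (Fin d))
    (hm : Measurable (Function.uncurry G)) (M : ℝ) (hM : 0 < M) (hb : ∀ x y, ‖G x y‖ ≤ M)
    (N : ℕ) (hN : 2 ≤ N) (ρ : Measure (Torus d)) [IsProbabilityMeasure ρ]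
    (ρN : Measure (Fin N → Torus d)) [IsProbabilityMeasure ρN]
    (hH : relEntropy ρN (Measure.pi fun _ => ρ) < ⊤) :
    ∫ x : Fin N → Torus d,
      ‖psiDiff d (fun μ₁ μ₂ => ∫ x, ∫ y, G x y ∂μ₂ ∂μ₁) (empiricalMeasure d N x) ρ‖ ∂ρN
    ≤ (d * (8 * M * (8 * C0 + 4))) / N * ((relEntropy ρN (Measure.pi fun _ => ρ)).toReal + 1) := by
  have hcond : ρN ≪ (Measure.pi fun _ => ρ) ∧ Integrable
      (fun x => (ρN.rnDeriv (Measure.pi fun _ => ρ) x).toReal *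
        Real.log (ρN.rnDeriv (Measure.pi fun _ => ρ) x).toReal) (Measure.pi fun _ => ρ) := by
    by_contra hc
    rw [relEntropy, if_neg hc] at hH
    exact lt_irrefl _ hH
  rw [relEntropy, if_pos hcond, EReal.toReal_coe]
  obtain ⟨hac, hint⟩ := hcond
  have iG1 : ∀ x, Integrable (fun y => G x y) ρ := fun x =>
    Integrable.of_bound (hm.comp (measurable_const.prodMk measurable_id)).aestronglyMeasurable M
      (Filter.Eventually.of_forall fun y => hb x y)
  have iG2 : ∀ y, Integrable (fun x => G x y) ρ := fun y =>
    Integrable.of_bound (hm.comp (measurable_id.prodMk measurable_const)).aestronglyMeasurable M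
      (Filter.Eventually.of_forall fun x => hb x y)
  have iGG : Integrable (Function.uncurry G) (ρ.prod ρ) :=
    Integrable.of_bound hm.aestronglyMeasurable M (Filter.Eventually.of_forall fun x => hb x.1 x.2)
  set P : (Fin N → Torus d) → EuclideanSpace ℝ (Fin d) := fun x =>
    psiDiff d (fun μ₁ μ₂ => ∫ x, ∫ y, G x y ∂μ₂ ∂μ₁) (empiricalMeasure d N x) ρ with hP
  have hPk : ∀ k x, P x k = (N:ℝ)⁻¹ * ∑ i, (N:ℝ)⁻¹ * ∑ j, G (x i) (x j) k
      - (N:ℝ)⁻¹ * ∑ i, ∫ y, G (x i) y k ∂ρ - ∫ z, (N:ℝ)⁻¹ * ∑ j, G z (x j) k ∂ρ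
      + ∫ z, ∫ y, G z y k ∂ρ ∂ρ := fun k x => by
    have e1 := coord ρ (fun z => (N:ℝ)⁻¹ • ∑ j, G z (x j))
      ((integrable_finsetSum Finset.univ fun j _ => iG2 (x j)).smul (N:ℝ)⁻¹) k
    have e2 := coord ρ (fun z => ∫ y, G z y ∂ρ) iGG.integral_prod_left k
    simp only [coord ρ _ (iG1 _) k] at e2
    simp only [hP, psiDiff, int_emp]
    simp only [PiLp.add_apply, PiLp.sub_apply]
    rw [e1, e2]
    simp only [PiLp.smul_apply, WithLp.ofLp_sum, Finset.sum_apply, smul_eq_mul,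
      coord ρ _ (iG1 _) k]
  have hs := fun k => scalar ρ (fun x y => G x y k)
    ((EuclideanSpace.proj k : EuclideanSpace ℝ (Fin d) →L[ℝ] ℝ).continuous.measurable.comp hm)
    M hM (fun x y => (PiLp.norm_apply_le (G x y) k).trans (hb x y)) N (by omega) ρN hac hint
    (fun x => P x k) (hPk k)
  calc ∫ x, ‖P x‖ ∂ρN ≤ ∫ x, ∑ k, |P x k| ∂ρN := by
        refine integral_mono_of_nonneg (Filter.Eventually.of_forall fun x => norm_nonneg _)
          (integrable_finsetSum _ fun k _ => (hs k).1.abs) (Filter.Eventually.of_forall fun x => ?_)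
        simp only
        rw [EuclideanSpace.norm_eq]
        refine Real.sqrt_le_iff.2 ⟨Finset.sum_nonneg fun _ _ => abs_nonneg _, ?_⟩
        simp only [Real.norm_eq_abs]
        exact Finset.sum_sq_le_sq_sum_of_nonneg fun _ _ => abs_nonneg _
    _ = ∑ k, ∫ x, |P x k| ∂ρN := integral_finsetSum _ fun k _ => (hs k).1.abs
    _ ≤ ∑ k : Fin d, _ := Finset.sum_le_sum fun k _ => (hs k).2
    _ = _ := by
      rw [Finset.sum_const, Finset.card_univ, Fintype.card_fin, nsmul_eq_mul]; ring

end S9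

/-- **Uniform estimate on the singular quadratic term (Lemma 2.7 of Wang–Zhao–Zhu).**
Let `K : 𝕋^d → ℝ^d` satisfy either (i) `K` bounded (by `B`), or (ii) `K(−x) = −K(x)`,
`K(0) = 0` and `sup_x |x||K(x)| ≤ B`, and let `φ` be continuously differentiable on `𝕋^d`
(i.e. its periodic lift to `ℝ^d` is `C¹`).  Then there is `C > 0`, depending only on `d`,
`φ` and `B`, such that for every `N ≥ 2`, every probability measure `ρ̄` on `𝕋^d` and
every probability measure `ρ_N` on `(𝕋^d)^N` with `H(ρ_N | ρ̄^{⊗N}) < ∞`: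
`∫ |Ψ(μ_N − ρ̄)| dρ_N ≤ (C/N)(H(ρ_N | ρ̄^{⊗N}) + 1)`,
with `Ψ` the quadratic pairing of the respective case. -/
theorem statement9 (d : ℕ) (hd : 1 ≤ d) (φ : Torus d → ℝ)
    (hφ : ContDiff ℝ 1 fun v : Fin d → ℝ =>
      φ fun j => ((v j : ℝ) : AddCircle (2 * Real.pi)))
    (B : ℝ) :
    (∃ C : ℝ, 0 < C ∧
      ∀ K : Torus d → EuclideanSpace ℝ (Fin d), Measurable K →
        (∀ x, ‖K x‖ ≤ B) →
        ∀ N : ℕ, 2 ≤ N →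
        ∀ (ρ : Measure (Torus d)), IsProbabilityMeasure ρ →
        ∀ (ρN : Measure (Fin N → Torus d)), IsProbabilityMeasure ρN →
          relEntropy ρN (Measure.pi fun _ => ρ) < ⊤ →
          ∫ x : Fin N → Torus d,
              ‖psiDiff d (psiBil₁ d K φ) (empiricalMeasure d N x) ρ‖ ∂ρN
          ≤ C / N * ((relEntropy ρN (Measure.pi fun _ => ρ)).toReal + 1)) ∧
    (∃ C : ℝ, 0 < C ∧
      ∀ K : Torus d → EuclideanSpace ℝ (Fin d), Measurable K →
        (∀ x, K (-x) = -K x) → K 0 = 0 →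
        (∀ x, dist x 0 * ‖K x‖ ≤ B) →
        ∀ N : ℕ, 2 ≤ N →
        ∀ (ρ : Measure (Torus d)), IsProbabilityMeasure ρ →
        ∀ (ρN : Measure (Fin N → Torus d)), IsProbabilityMeasure ρN →
          relEntropy ρN (Measure.pi fun _ => ρ) < ⊤ →
          ∫ x : Fin N → Torus d,
              ‖psiDiff d (psiBil₂ d K φ) (empiricalMeasure d N x) ρ‖ ∂ρN
          ≤ C / N * ((relEntropy ρN (Measure.pi fun _ => ρ)).toReal + 1)) := by
  obtain ⟨L, hL⟩ := S9.phi_lip φ hφ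
  have hC := S9.C0_nonneg
  have hd' : (0:ℝ) < d := by exact_mod_cast hd
  have hφm : Measurable φ := hL.continuous.measurable
  have hφb : ∀ x, |φ x| ≤ |φ 0| + L * Real.pi := fun x => by
    have h1 := hL.dist_le_mul x 0
    rw [dist_zero_right, Real.dist_eq] at h1
    have h2 := S9.norm_torus x
    have h3 : (L:ℝ) * ‖x‖ ≤ L * Real.pi := mul_le_mul_of_nonneg_left h2 L.2
    have h4 := abs_sub_abs_le_abs_sub (φ x) (φ 0)
    linarith
  constructor
  · set M : ℝ := (|φ 0| + L * Real.pi) * |B| + 1 with hMd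
    have hp := Real.pi_pos
    have hM : 0 < M := by positivity
    refine ⟨d * (8 * M * (8 * S9.C0 + 4)), by positivity, ?_⟩
    intro K hK hKB N hN ρ _ ρN _ hH
    refine S9.combine (fun x y => φ x • K (x - y)) ?_ M hM ?_ N hN ρ ρN hH
    · exact (hφm.comp measurable_fst).smul (hK.comp (measurable_fst.sub measurable_snd))
    · intro x y
      rw [norm_smul, Real.norm_eq_abs]
      have : |φ x| * ‖K (x - y)‖ ≤ (|φ 0| + L * Real.pi) * |B| :=
        mul_le_mul (hφb x) ((hKB _).trans (le_abs_self _)) (norm_nonneg _) (by positivity)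
      linarith
  · set M : ℝ := L * |B| + 1 with hMd
    have hM : 0 < M := by positivity
    refine ⟨d * (8 * M * (8 * S9.C0 + 4)), by positivity, ?_⟩
    intro K hK _ _ hKB N hN ρ _ ρN _ hH
    refine S9.combine (fun x y => ((2 : ℝ)⁻¹ * (φ x - φ y)) • K (x - y)) ?_ M hM ?_ N hN ρ ρN hH
    · exact (measurable_const.mul ((hφm.comp measurable_fst).sub (hφm.comp measurable_snd))).smul
        (hK.comp (measurable_fst.sub measurable_snd))
    · intro x y
      rw [norm_smul, norm_mul, ← dist_eq_norm]
      have h1 := hL.dist_le_mul x y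
      have h2 := hKB (x - y)
      rw [dist_zero_right, ← dist_eq_norm] at h2
      have h3 : dist (φ x) (φ y) * ‖K (x - y)‖ ≤ L * |B| := by
        calc _ ≤ L * dist x y * ‖K (x - y)‖ := by gcongr
          _ = L * (dist x y * ‖K (x - y)‖) := by ring
          _ ≤ _ := by
            gcongr
            exact h2.trans (le_abs_self _)
      have h4 : 0 ≤ dist (φ x) (φ y) * ‖K (x - y)‖ := by positivity
      have h5 : ‖(2:ℝ)⁻¹‖ = 1/2 := by norm_num
      rw [h5]
      linarith
end

section
/- Let E be a Polish space (a separable, completely metrizable topological space with a compatible complete metric) and let (Z_N)_{N ≥ 1} be a sequence of E-valued random variables on a probability space (Ω, ℱ, ℙ). Then (Z_N) converges in probability to some E-valued random variable if and only if for every pair of strictly increasing sequences of indices (l_k) and (m_k) there exists a strictly increasing sequence (k_j) such that the joint laws of the pairs (Z_{l_{k_j}}, Z_{m_{k_j}}) converge weakly, as j → ∞, to a probability measure on E × E that is supported on the diagonal {(x, y) ∈ E × E : x = y}. -/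
open MeasureTheory Filter

theorem gk_cauchy {Ω : Type*} [MeasurableSpace Ω] (P : Measure Ω)
    [IsProbabilityMeasure P]
    {E : Type*} [MetricSpace E] [CompleteSpace E] [SecondCountableTopology E]
    [MeasurableSpace E] [BorelSpace E]
    (Z : ℕ → Ω → E) (hZ : ∀ N, Measurable (Z N))
    (H : ∀ l m : ℕ → ℕ, StrictMono l → StrictMono m →
      ∃ k : ℕ → ℕ, StrictMono k ∧
        ∃ μ : Measure (E × E), IsProbabilityMeasure μ ∧
          μ {p : E × E | p.1 ≠ p.2} = 0 ∧
          ∀ g : BoundedContinuousFunction (E × E) ℝ,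
            Tendsto
              (fun j => ∫ p, g p
                ∂(Measure.map (fun ω => (Z (l (k j)) ω, Z (m (k j)) ω)) P))
              atTop (nhds (∫ p, g p ∂μ))) (ε : ℝ) (hε : 0 < ε) :
    ∃ N, ∀ n ≥ N, ∀ m ≥ N, P.real {ω | ε ≤ dist (Z n ω) (Z m ω)} < ε := by
  by_contra! hc
  choose a ha b hb hab using hc
  have ta : Tendsto a atTop atTop := tendsto_atTop_mono ha tendsto_id
  have tb : Tendsto b atTop atTop := tendsto_atTop_mono hb tendsto_id
  obtain ⟨φ, hφ, hφ'⟩ := strictMono_subseq_of_tendsto_atTop ta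
  obtain ⟨ψ, hψ, hψ'⟩ := strictMono_subseq_of_tendsto_atTop (tb.comp hφ.tendsto_atTop)
  obtain ⟨k, hk, μ, hμ, hd, hg⟩ := H (a ∘ φ ∘ ψ) (b ∘ φ ∘ ψ) (hφ'.comp hψ) hψ'
  let g : BoundedContinuousFunction (E × E) ℝ :=
    BoundedContinuousFunction.ofNormedAddCommGroup (fun p => min (dist p.1 p.2 / ε) 1)
      (by fun_prop) 1 (fun p => by
        rw [Real.norm_of_nonneg (le_min (by positivity) zero_le_one)]
        exact min_le_right _ _)
  have hgv : ∀ p, g p = min (dist p.1 p.2 / ε) 1 := fun p => rfl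
  have h0 : ∫ p, g p ∂μ = 0 := by
    apply integral_eq_zero_of_ae
    have : ∀ᵐ p ∂μ, p.1 = p.2 := by
      rw [ae_iff]; exact hd
    filter_upwards [this] with p hp
    simp [hgv, hp]
  have ht := hg g
  rw [h0] at ht
  have : ε ≤ 0 := by
    apply ge_of_tendsto' ht
    intro j
    refine (hab (φ (ψ (k j)))).trans ?_
    have hm : Measurable (fun ω => (Z ((a ∘ φ ∘ ψ) (k j)) ω, Z ((b ∘ φ ∘ ψ) (k j)) ω)) :=
      (hZ _).prodMk (hZ _)
    rw [integral_map hm.aemeasurable g.continuous.measurable.aestronglyMeasurable]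
    have hs : MeasurableSet {ω | ε ≤ dist (Z (a (φ (ψ (k j)))) ω) (Z (b (φ (ψ (k j)))) ω)} :=
      measurableSet_le measurable_const ((hZ _).dist (hZ _))
    rw [← integral_indicator_one hs]
    apply integral_mono
    · exact (integrable_const (1:ℝ)).indicator hs
    · refine Integrable.of_bound (g.continuous.measurable.comp hm).aestronglyMeasurable ‖g‖ ?_
      exact Eventually.of_forall fun ω => g.norm_coe_le_norm _
    · intro ω
      simp only [hgv]
      apply Set.indicator_le' (f := (1 : Ω → ℝ))
        (g := fun ω => min (dist (Z (a (φ (ψ (k j)))) ω) (Z (b (φ (ψ (k j)))) ω) / ε) 1)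
      · intro x hx
        exact le_min ((one_le_div hε).2 hx) le_rfl
      · intro x _
        exact le_min (by positivity) zero_le_one
  linarith

theorem gk_limit {Ω : Type*} [MeasurableSpace Ω] (P : Measure Ω)
    [IsProbabilityMeasure P]
    {E : Type*} [MetricSpace E] [CompleteSpace E] [SecondCountableTopology E]
    [MeasurableSpace E] [BorelSpace E]
    (Z : ℕ → Ω → E) (hZ : ∀ N, Measurable (Z N))
    (H : ∀ ε : ℝ, 0 < ε →
      ∃ N, ∀ n ≥ N, ∀ m ≥ N, P.real {ω | ε ≤ dist (Z n ω) (Z m ω)} < ε) :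
    ∃ Zlim : Ω → E, Measurable Zlim ∧ TendstoInMeasure P Z atTop Zlim := by
  have hev : ∀ n : ℕ, ∀ᶠ N in atTop, ∀ j ≥ N,
      P.real {ω | (1/2:ℝ)^n ≤ dist (Z N ω) (Z j ω)} < (1/2:ℝ)^n := by
    intro n
    obtain ⟨N, hN⟩ := H ((1/2)^n) (by positivity)
    filter_upwards [eventually_ge_atTop N] with i hi j hj
    exact hN i hi j (hi.trans hj)
  obtain ⟨φ, hφ, hφ'⟩ := extraction_forall_of_eventually hev
  have hae : ∀ᵐ ω ∂P, ∀ᶠ n in atTop,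
      ω ∉ {ω | (1/2:ℝ)^n ≤ dist (Z (φ n) ω) (Z (φ (n+1)) ω)} := by
    apply ae_eventually_notMem
    refine ne_top_of_le_ne_top (b := ∑' n : ℕ, ENNReal.ofReal ((1/2:ℝ)^n)) ?_ ?_
    · exact (summable_geometric_two).tsum_ofReal_ne_top
    · refine ENNReal.tsum_le_tsum fun n => ?_
      rw [← ofReal_measureReal]
      exact ENNReal.ofReal_le_ofReal (hφ' n _ (hφ n.lt_succ_self).le).le
  have hlim : ∀ᵐ ω ∂P, ∃ x, Tendsto (fun n => Z (φ n) ω) atTop (nhds x) := by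
    filter_upwards [hae] with ω hω
    obtain ⟨M, hM⟩ := eventually_atTop.1 hω
    apply cauchySeq_tendsto_of_complete
    rw [← cauchySeq_shift M]
    apply cauchySeq_of_le_geometric (1/2) 1 (by norm_num)
    intro n
    have := hM (n + M) (by omega)
    simp only [Set.mem_setOf_eq, not_le] at this
    rw [show n + 1 + M = n + M + 1 by ring, one_mul]
    exact this.le.trans (pow_le_pow_of_le_one (by norm_num) (by norm_num) (by omega))
  obtain ⟨Y, hY, hYt⟩ := measurable_limit_of_tendsto_metrizable_ae
    (fun n => (hZ (φ n)).aemeasurable) hlim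
  refine ⟨Y, hY, ?_⟩
  have hT : TendstoInMeasure P (fun n => Z (φ n)) atTop Y :=
    tendstoInMeasure_of_tendsto_ae (fun n => (hZ _).aestronglyMeasurable) hYt
  rw [tendstoInMeasure_iff_measureReal_dist] at hT ⊢
  intro ε hε
  rw [Metric.tendsto_atTop]
  intro δ hδ
  obtain ⟨N, hN⟩ := H (min (ε/2) (δ/2)) (by positivity)
  refine ⟨N, fun n hn => ?_⟩
  obtain ⟨j, hj1, hj2⟩ := (((hT (ε/2) (by positivity)).eventually_lt_const
    (show (0:ℝ) < δ/2 by positivity)).and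
    (hφ.tendsto_atTop.eventually_ge_atTop N)).exists
  have h1 := hN n hn _ hj2
  rw [Real.dist_eq, sub_zero, abs_of_nonneg measureReal_nonneg]
  have hsub : {ω | ε ≤ dist (Z n ω) (Y ω)} ⊆
      {ω | min (ε/2) (δ/2) ≤ dist (Z n ω) (Z (φ j) ω)} ∪ {ω | ε/2 ≤ dist (Z (φ j) ω) (Y ω)} := by
    intro ω hω
    by_contra hc
    simp only [Set.mem_union, Set.mem_setOf_eq, not_or, not_le] at hc hω
    have := dist_triangle (Z n ω) (Z (φ j) ω) (Y ω)
    have := min_le_left (ε/2) (δ/2)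
    linarith [hc.1, hc.2]
  have h2 := (measureReal_mono (μ := P) hsub).trans (measureReal_union_le _ _)
  have := min_le_right (ε/2) (δ/2)
  linarith


/-- **Gyöngy–Krylov lemma.**  Let `E` be a Polish space (here: a complete separable metric
space with its Borel σ-algebra) and `(Z_N)` a sequence of `E`-valued random variables on a
probability space `(Ω, ℱ, ℙ)`.  Then `(Z_N)` converges in probability to some `E`-valued
random variable if and only if for every pair of (strictly increasing) subsequences
`(l_k)`, `(m_k)` there is a further subsequence `(k_j)` such that the joint laws of
`(Z_{l_{k_j}}, Z_{m_{k_j}})` converge weakly to a probability measure on `E × E`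
supported on the diagonal. -/
theorem statement10 {Ω : Type*} [MeasurableSpace Ω] (P : Measure Ω)
    [IsProbabilityMeasure P]
    {E : Type*} [MetricSpace E] [CompleteSpace E] [SecondCountableTopology E]
    [MeasurableSpace E] [BorelSpace E]
    (Z : ℕ → Ω → E) (hZ : ∀ N, Measurable (Z N)) :
    (∃ Zlim : Ω → E, Measurable Zlim ∧ TendstoInMeasure P Z atTop Zlim) ↔
    (∀ l m : ℕ → ℕ, StrictMono l → StrictMono m →
      ∃ k : ℕ → ℕ, StrictMono k ∧
        ∃ μ : Measure (E × E), IsProbabilityMeasure μ ∧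
          μ {p : E × E | p.1 ≠ p.2} = 0 ∧
          ∀ g : BoundedContinuousFunction (E × E) ℝ,
            Tendsto
              (fun j => ∫ p, g p
                ∂(Measure.map (fun ω => (Z (l (k j)) ω, Z (m (k j)) ω)) P))
              atTop (nhds (∫ p, g p ∂μ))) := by
  constructor
  · rintro ⟨Y, hY, hT⟩ l m hl hm
    obtain ⟨k₁, hk₁, h₁⟩ := (hT.comp hl.tendsto_atTop).exists_seq_tendsto_ae
    obtain ⟨k₂, hk₂, h₂⟩ :=
      (hT.comp (hm.comp hk₁).tendsto_atTop).exists_seq_tendsto_ae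
    have hYY : Measurable (fun ω => (Y ω, Y ω)) := hY.prodMk hY
    refine ⟨k₁ ∘ k₂, hk₁.comp hk₂, P.map (fun ω => (Y ω, Y ω)),
      Measure.isProbabilityMeasure_map hYY.aemeasurable, ?_, ?_⟩
    · rw [Measure.map_apply hYY]
      · simp
      · exact (measurableSet_eq_fun measurable_fst measurable_snd).compl
    · intro g
      have hgm : Measurable g := g.continuous.measurable
      have hpm : ∀ j, Measurable
          (fun ω => (Z (l ((k₁ ∘ k₂) j)) ω, Z (m ((k₁ ∘ k₂) j)) ω)) :=
        fun j => (hZ _).prodMk (hZ _)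
      rw [integral_map hYY.aemeasurable hgm.aestronglyMeasurable]
      refine Tendsto.congr (fun j =>
        (integral_map (hpm j).aemeasurable hgm.aestronglyMeasurable).symm) ?_
      apply tendsto_integral_of_dominated_convergence (fun _ => ‖g‖)
      · exact fun j => (hgm.comp (hpm j)).aestronglyMeasurable
      · exact integrable_const _
      · exact fun j => Eventually.of_forall fun ω => g.norm_coe_le_norm _
      · filter_upwards [h₁, h₂] with ω a b
        exact (g.continuous.tendsto _).comp
          ((a.comp hk₂.tendsto_atTop).prodMk_nhds b)
  · intro H
    exact gk_limit P Z hZ (gk_cauchy P Z hZ H)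
end

section
/- Let d ≥ 1, let ρ̄ be a probability measure on ℝ^d, and let φ : ℝ^d → ℝ be a Schwartz function. Set m := ∫ φ dρ̄ and v := ∫ φ² dρ̄ − m², let G_φ denote the centered Gaussian measure on ℝ with variance v, and for a probability measure P on (ℝ^d)^N let T_N P denote the pushforward of P under the map (x_1,…,x_N) ↦ (Σ_{i=1}^N φ(x_i) − N m)/√N. Then there exists λ > 0, depending only on ρ̄ and φ, such that for every integer N ≥ 2, every probability measure ρ_N on (ℝ^d)^N, and every κ > 0: d_bL( T_N ρ_N, G_φ ) ≤ (1/κ) H( ρ_N | ρ̄^{⊗N} ) + κ/(2λ) + d_bL( T_N (ρ̄^{⊗N}), G_φ ). -/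
open MeasureTheory Classical

/-- The bounded-Lipschitz distance between two measures on `ℝ`:
`d_bL(μ,ν) = sup { ∫ g dμ − ∫ g dν : ‖g‖_∞ + ‖g‖_Lip ≤ 1 }`. -/
noncomputable def dBL (μ ν : Measure ℝ) : ℝ :=
  sSup { r : ℝ | ∃ g : ℝ → ℝ, ∃ Cb CL : ℝ, 0 ≤ CL ∧
    (∀ x, |g x| ≤ Cb) ∧ LipschitzWith (Real.toNNReal CL) g ∧ Cb + CL ≤ 1 ∧
    r = ∫ x, g x ∂μ - ∫ x, g x ∂ν }

/-- The law of the normalized fluctuation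
`(x_1,…,x_N) ↦ (∑_i φ(x_i) − N m)/√N` under a measure `P` on `(ℝ^d)^N`. -/
noncomputable def fluctLaw (d N : ℕ) (φ : EuclideanSpace ℝ (Fin d) → ℝ) (m : ℝ)
    (P : Measure (Fin N → EuclideanSpace ℝ (Fin d))) : Measure ℝ :=
  Measure.map (fun x => ((∑ i, φ (x i)) - N * m) / Real.sqrt N) P

lemma aux_young (f a : ℝ) (hf : 0 ≤ f) : f * a ≤ f * Real.log f - f + Real.exp a := by
  rcases hf.eq_or_lt with h | h
  · subst h; simp [(Real.exp_pos a).le]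
  · have h1 := Real.add_one_le_exp (a - Real.log f)
    rw [Real.exp_sub, Real.exp_log h, le_div_iff₀ h] at h1
    nlinarith

lemma aux_hoeff {E : Type*} [MeasurableSpace E] (ν : Measure E) [IsProbabilityMeasure ν]
    (h : E → ℝ) (hm : Measurable h) (hb : ∀ x, |h x| ≤ 1) (κ : ℝ) :
    ∫ x, Real.exp (κ * h x - (κ * ∫ y, h y ∂ν + κ ^ 2 / 2)) ∂ν ≤ 1 := by
  have H := ProbabilityTheory.hasSubgaussianMGF_of_mem_Icc (μ := ν) (X := h) (a := -1) (b := 1)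
    hm.aemeasurable (Filter.Eventually.of_forall fun x => abs_le.1 (hb x))
  have H1 := H.mgf_le κ
  rw [ProbabilityTheory.mgf] at H1
  have e : ∀ x, Real.exp (κ * h x - (κ * ∫ y, h y ∂ν + κ ^ 2 / 2))
      = Real.exp (κ * (h x - ∫ y, h y ∂ν)) * Real.exp (-(κ ^ 2 / 2)) := by
    intro x; rw [← Real.exp_add]; ring_nf
  simp_rw [e]
  rw [integral_mul_const]
  calc _ ≤ Real.exp (κ ^ 2 / 2) * Real.exp (-(κ ^ 2 / 2)) := by
        gcongr
        refine H1.trans (le_of_eq ?_)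
        congr 1
        norm_num
    _ = 1 := by rw [← Real.exp_add]; simp

lemma aux_dv {E : Type*} [MeasurableSpace E] (μ ν : Measure E) [IsProbabilityMeasure μ]
    [IsProbabilityMeasure ν] (h : E → ℝ) (hm : Measurable h) (hb : ∀ x, |h x| ≤ 1)
    (κ : ℝ) (hκ : 0 < κ) (hac : μ ≪ ν)
    (hi : Integrable (fun x => (μ.rnDeriv ν x).toReal * Real.log (μ.rnDeriv ν x).toReal) ν) :
    ∫ x, h x ∂μ - ∫ x, h x ∂ν ≤
      κ⁻¹ * (∫ x, (μ.rnDeriv ν x).toReal * Real.log (μ.rnDeriv ν x).toReal ∂ν) + κ / 2 := by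
  set c := κ * ∫ y, h y ∂ν + κ ^ 2 / 2 with hc
  have hhμ : Integrable h μ := Integrable.of_bound hm.aestronglyMeasurable 1
    (Filter.Eventually.of_forall hb)
  have hA : Integrable (fun x => κ * h x - c) μ := (hhμ.const_mul κ).sub (integrable_const c)
  have hfA : Integrable (fun x => (μ.rnDeriv ν x).toReal * (κ * h x - c)) ν := by
    have := (integrable_rnDeriv_smul_iff (f := fun x => κ * h x - c) hac).2 hA
    simpa [smul_eq_mul] using this
  have hf : Integrable (fun x => (μ.rnDeriv ν x).toReal) ν := Measure.integrable_toReal_rnDeriv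
  have hE : Integrable (fun x => Real.exp (κ * h x - c)) ν := by
    refine Integrable.of_bound (by fun_prop) (Real.exp (κ - c))
      (Filter.Eventually.of_forall fun x => ?_)
    rw [Real.norm_eq_abs, Real.abs_exp]
    have := (abs_le.1 (hb x)).2
    gcongr
    nlinarith
  have h1 := integral_mono hfA ((hi.sub hf).add hE)
    (fun x => aux_young (μ.rnDeriv ν x).toReal (κ * h x - c) ENNReal.toReal_nonneg)
  have e1 : ∫ x, (μ.rnDeriv ν x).toReal * (κ * h x - c) ∂ν = κ * ∫ x, h x ∂μ - c := by
    have := integral_rnDeriv_smul (f := fun x => κ * h x - c) hac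
    simp only [smul_eq_mul] at this
    rw [this, integral_sub (hhμ.const_mul κ) (integrable_const c), integral_const_mul]
    simp
  have e2 : ∫ x, (μ.rnDeriv ν x).toReal ∂ν = 1 := by
    rw [Measure.integral_toReal_rnDeriv hac]; simp
  have e3 := aux_hoeff ν h hm hb κ
  rw [← hc] at e3
  rw [integral_add' (hi.sub hf) hE, integral_sub' hi hf, e1, e2] at h1
  set I := ∫ x, (μ.rnDeriv ν x).toReal * Real.log (μ.rnDeriv ν x).toReal ∂ν
  have h2 : κ * (∫ x, h x ∂μ - ∫ x, h x ∂ν) ≤ κ * (κ⁻¹ * I + κ / 2) := by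
    rw [mul_add, mul_inv_cancel_left₀ hκ.ne']
    nlinarith
  exact le_of_mul_le_mul_left h2 hκ

lemma aux_le_dBL (μ ν : Measure ℝ) [IsProbabilityMeasure μ] [IsProbabilityMeasure ν]
    (g : ℝ → ℝ) (Cb CL : ℝ) (h0 : 0 ≤ CL) (hb : ∀ x, |g x| ≤ Cb)
    (hL : LipschitzWith (Real.toNNReal CL) g) (h1 : Cb + CL ≤ 1) :
    ∫ x, g x ∂μ - ∫ x, g x ∂ν ≤ dBL μ ν := by
  refine le_csSup ⟨2, ?_⟩ ⟨g, Cb, CL, h0, hb, hL, h1, rfl⟩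
  rintro r ⟨g, Cb, CL, h0, hb, hL, h1, rfl⟩
  have a1 := norm_integral_le_of_norm_le_const (μ := μ) (f := g) (C := Cb) (Filter.Eventually.of_forall hb)
  have a2 := norm_integral_le_of_norm_le_const (μ := ν) (f := g) (C := Cb) (Filter.Eventually.of_forall hb)
  simp only [Real.norm_eq_abs, probReal_univ, mul_one] at a1 a2
  have := (abs_le.1 a1).2
  have := (abs_le.1 a2).1
  linarith

/-- **Quantitative CLT via relative entropy (Proposition 6.3 of Wang–Zhao–Zhu).**
Let `ρ̄` be a probability measure on `ℝ^d` and `φ` a Schwartz function with mean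
`m = ∫ φ dρ̄` and variance `v = ∫ φ² dρ̄ − m²`; let `G_φ` be the centered Gaussian on `ℝ`
with variance `v`.  Then there is `λ > 0` (depending only on `ρ̄` and `φ`) such that for
every `N ≥ 2`, every probability measure `ρ_N` on `(ℝ^d)^N` and every `κ > 0`:
`d_bL(T_N ρ_N, G_φ) ≤ (1/κ) H(ρ_N | ρ̄^{⊗N}) + κ/(2λ) + d_bL(T_N ρ̄^{⊗N}, G_φ)`
(as an inequality in the extended reals, the entropy possibly being infinite). -/
theorem statement11 (d : ℕ) (hd : 1 ≤ d)
    (ρ : Measure (EuclideanSpace ℝ (Fin d))) [IsProbabilityMeasure ρ]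
    (φ : SchwartzMap (EuclideanSpace ℝ (Fin d)) ℝ) :
    ∃ lam : ℝ, 0 < lam ∧
      ∀ N : ℕ, 2 ≤ N →
      ∀ (ρN : Measure (Fin N → EuclideanSpace ℝ (Fin d))), IsProbabilityMeasure ρN →
      ∀ κ : ℝ, 0 < κ →
        ((dBL
            (fluctLaw d N φ (∫ y, φ y ∂ρ) ρN)
            (ProbabilityTheory.gaussianReal 0
              (Real.toNNReal (∫ y, (φ y) ^ 2 ∂ρ - (∫ y, φ y ∂ρ) ^ 2))) : ℝ) : EReal)
          ≤ ((κ⁻¹ : ℝ) : EReal) * relEntropy ρN (Measure.pi fun _ => ρ)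
            + ((κ / (2 * lam)
                + dBL
                    (fluctLaw d N φ (∫ y, φ y ∂ρ) (Measure.pi fun _ => ρ))
                    (ProbabilityTheory.gaussianReal 0
                      (Real.toNNReal
                        (∫ y, (φ y) ^ 2 ∂ρ - (∫ y, φ y ∂ρ) ^ 2))) : ℝ) : EReal) := by
  refine ⟨1, one_pos, ?_⟩
  intro N hN ρN hρN κ hκ
  set γ := ProbabilityTheory.gaussianReal 0
    (Real.toNNReal (∫ y, (φ y) ^ 2 ∂ρ - (∫ y, φ y ∂ρ) ^ 2))
  set m := ∫ y, φ y ∂ρ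
  rw [relEntropy]
  split_ifs with hc
  · obtain ⟨hac, hi⟩ := hc
    norm_cast
    have hφ : Measurable (φ : EuclideanSpace ℝ (Fin d) → ℝ) := φ.continuous.measurable
    have hT : Measurable (fun x : Fin N → EuclideanSpace ℝ (Fin d) =>
        ((∑ i, φ (x i)) - N * m) / Real.sqrt N) := by fun_prop
    have : IsProbabilityMeasure (fluctLaw d N φ m (Measure.pi fun _ => ρ)) :=
      Measure.isProbabilityMeasure_map hT.aemeasurable
    refine csSup_le ⟨0, fun _ => 0, 0, 0, le_rfl, by simp, LipschitzWith.const' 0, by simp,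
      by simp⟩ ?_
    rintro r ⟨g, Cb, CL, h0, hb, hL, h1, rfl⟩
    have hg : Measurable g := hL.continuous.measurable
    have k1 := aux_le_dBL (fluctLaw d N φ m (Measure.pi fun _ => ρ)) γ g Cb CL h0 hb hL h1
    have k2 := aux_dv ρN (Measure.pi fun _ => ρ) _ (hg.comp hT)
      (fun x => (hb _).trans (by linarith)) κ hκ hac hi
    have e : ∀ P : Measure (Fin N → EuclideanSpace ℝ (Fin d)),
        ∫ x, g x ∂(fluctLaw d N φ m P) = ∫ x, (g ∘ (fun x : Fin N → EuclideanSpace ℝ (Fin d) =>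
        ((∑ i, φ (x i)) - N * m) / Real.sqrt N)) x ∂P := fun P =>
      integral_map hT.aemeasurable hg.aestronglyMeasurable
    rw [e] at k1 ⊢
    rw [mul_one]
    linarith
  · rw [EReal.coe_mul_top_of_pos (inv_pos.2 hκ), EReal.top_add_coe]
    exact le_top
end

section
/- Let d ≥ 1, let ρ̄ be a probability measure on ℝ^d, and let φ : ℝ^d → ℝ be a Schwartz function. Set m := ∫ φ dρ̄ and v := ∫ φ² dρ̄ − m², let G_φ denote the centered Gaussian measure on ℝ with variance v, and for each N let ρ_N be a probability measure on (ℝ^d)^N and let T_N ρ_N denote the pushforward of ρ_N under the map (x_1,…,x_N) ↦ (Σ_{i=1}^N φ(x_i) − N m)/√N. If H( ρ_N | ρ̄^{⊗N} ) → 0 as N → ∞, then the probability measures T_N ρ_N converge weakly to G_φ as N → ∞. -/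
open MeasureTheory Classical Filter

lemma aux_young_s12 (x s : ℝ) (hx : 0 ≤ x) (hs : 0 ≤ s) (hs1 : s ≤ 1) :
    s * |x - 1| ≤ x * Real.log x + 1 - x + s ^ 2 := by
  have key : ∀ t : ℝ, t * (x - 1) ≤ x * Real.log x + 1 - x + (Real.exp t - 1 - t) := by
    intro t
    rcases hx.eq_or_lt with h | h
    · subst h
      have := Real.exp_pos t
      simp
      linarith
    · have h1 := Real.log_le_sub_one_of_pos (div_pos (Real.exp_pos t) h)
      rw [Real.log_div (Real.exp_pos t).ne' h.ne', Real.log_exp] at h1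
      have h2 := mul_le_mul_of_nonneg_left h1 hx
      have h3 : x * (Real.exp t / x - 1) = Real.exp t - x := by field_simp
      rw [h3] at h2
      nlinarith
  have hexp : ∀ t : ℝ, |t| ≤ 1 → Real.exp t - 1 - t ≤ t ^ 2 := by
    intro t ht
    exact (le_abs_self _).trans (Real.abs_exp_sub_one_sub_id_le ht)
  have h1 := key s
  have h2 := key (-s)
  have h3 := hexp s (by rw [abs_of_nonneg hs]; exact hs1)
  have h4 := hexp (-s) (by rw [abs_neg, abs_of_nonneg hs]; exact hs1)
  rcases abs_cases (x - 1) with ⟨h, _⟩ | ⟨h, _⟩ <;> rw [h] <;> nlinarith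

lemma aux_tv {E : Type*} [MeasurableSpace E] (μ ν : Measure E) [IsProbabilityMeasure μ]
    [IsProbabilityMeasure ν] (F : E → ℝ) (hF : Measurable F) (M : ℝ) (hM : ∀ x, |F x| ≤ M)
    (s : ℝ) (hs : 0 < s) (hs1 : s ≤ 1) (h : relEntropy μ ν ≤ ((s ^ 2 : ℝ) : EReal)) :
    |∫ x, F x ∂μ - ∫ x, F x ∂ν| ≤ M * (2 * s) := by
  unfold relEntropy at h
  split_ifs at h with hc
  swap
  · exact absurd (top_le_iff.1 h) (EReal.coe_ne_top _)
  obtain ⟨hac, hint⟩ := hc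
  have hle := EReal.coe_le_coe_iff.1 h
  have hfi : Integrable (fun x => (μ.rnDeriv ν x).toReal) ν := Measure.integrable_toReal_rnDeriv
  have hf1 : ∫ x, (μ.rnDeriv ν x).toReal ∂ν = 1 := by
    rw [Measure.integral_toReal_rnDeriv hac]; simp
  have hFν : Integrable F ν := Integrable.of_bound hF.aestronglyMeasurable M (ae_of_all _ hM)
  have hfF : Integrable (fun x => (μ.rnDeriv ν x).toReal * F x) ν :=
    hfi.mul_bdd hF.aestronglyMeasurable (ae_of_all _ hM)
  have hM0 : 0 ≤ M := by
    obtain ⟨x⟩ : Nonempty E := nonempty_of_isProbabilityMeasure ν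
    exact (abs_nonneg _).trans (hM x)
  have habs : Integrable (fun x => |(μ.rnDeriv ν x).toReal - 1|) ν :=
    (hfi.sub (integrable_const 1)).abs
  have e1 : ∫ x, F x ∂μ - ∫ x, F x ∂ν = ∫ x, ((μ.rnDeriv ν x).toReal - 1) * F x ∂ν := by
    rw [← integral_rnDeriv_smul hac, ← integral_sub (by simpa using hfF) hFν]
    congr 1; ext x; simp; ring
  have e2 : |∫ x, ((μ.rnDeriv ν x).toReal - 1) * F x ∂ν|
      ≤ ∫ x, M * |(μ.rnDeriv ν x).toReal - 1| ∂ν := by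
    rw [← Real.norm_eq_abs]
    refine norm_integral_le_of_norm_le (habs.const_mul M) (ae_of_all _ fun x => ?_)
    rw [Real.norm_eq_abs, abs_mul, mul_comm]
    exact mul_le_mul_of_nonneg_right (hM x) (abs_nonneg _)
  have e3 : ∫ x, s * |(μ.rnDeriv ν x).toReal - 1| ∂ν ≤
      ∫ x, ((μ.rnDeriv ν x).toReal * Real.log (μ.rnDeriv ν x).toReal + 1
        - (μ.rnDeriv ν x).toReal + s ^ 2) ∂ν := by
    refine integral_mono (habs.const_mul s)
      (((hint.add (integrable_const 1)).sub hfi).add (integrable_const _)) fun x => ?_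
    exact aux_young_s12 _ s ENNReal.toReal_nonneg hs.le hs1
  have e5 : ∫ x, ((μ.rnDeriv ν x).toReal * Real.log (μ.rnDeriv ν x).toReal + 1
        - (μ.rnDeriv ν x).toReal + s ^ 2) ∂ν =
      ∫ x, (μ.rnDeriv ν x).toReal * Real.log (μ.rnDeriv ν x).toReal ∂ν + s ^ 2 := by
    have a1 : Integrable (fun x => (μ.rnDeriv ν x).toReal * Real.log (μ.rnDeriv ν x).toReal
      + 1) ν := hint.add (integrable_const 1)
    have a2 : Integrable (fun x => (μ.rnDeriv ν x).toReal * Real.log (μ.rnDeriv ν x).toReal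
      + 1 - (μ.rnDeriv ν x).toReal) ν := a1.sub hfi
    rw [integral_add a2 (integrable_const _), integral_sub a1 hfi,
      integral_add hint (integrable_const 1), hf1]
    simp
  rw [e5, integral_const_mul] at e3
  have e4 : ∫ x, |(μ.rnDeriv ν x).toReal - 1| ∂ν ≤ 2 * s := by
    by_contra! hcon
    nlinarith
  rw [e1]
  refine e2.trans ?_
  rw [integral_const_mul]
  exact mul_le_mul_of_nonneg_left e4 hM0

lemma aux_clt (d : ℕ) (ρ : Measure (EuclideanSpace ℝ (Fin d))) [IsProbabilityMeasure ρ]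
    (φ : SchwartzMap (EuclideanSpace ℝ (Fin d)) ℝ) (g : BoundedContinuousFunction ℝ ℝ) :
      Tendsto
        (fun N => ∫ t, g t ∂(fluctLaw d N φ (∫ y, φ y ∂ρ) (Measure.pi fun _ => ρ)))
        atTop
        (nhds (∫ t, g t
          ∂(ProbabilityTheory.gaussianReal 0
              (Real.toNNReal (∫ y, (φ y) ^ 2 ∂ρ - (∫ y, φ y ∂ρ) ^ 2))))) := by
  have hφ : Measurable φ := φ.continuous.measurable
  set P : Measure (ℕ → EuclideanSpace ℝ (Fin d)) := Measure.infinitePi (fun _ => ρ) with hP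
  have hev : ∀ i : ℕ, MeasurePreserving (fun ω : ℕ → EuclideanSpace ℝ (Fin d) => ω i) P ρ :=
    fun i => measurePreserving_eval_infinitePi (fun _ => ρ) i
  let X : ℕ → (ℕ → EuclideanSpace ℝ (Fin d)) → ℝ := fun i ω => φ (ω i)
  have hmem0 : MemLp φ 2 ρ :=
    MemLp.of_bound hφ.aestronglyMeasurable ‖φ.toBoundedContinuousFunction‖
      (ae_of_all _ fun x => φ.toBoundedContinuousFunction.norm_coe_le_norm x)
  have hmem : MemLp (X 0) 2 P := hmem0.comp_measurePreserving (hev 0)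
  have hindep : ProbabilityTheory.iIndepFun X P :=
    ProbabilityTheory.iIndepFun_infinitePi (X := fun _ x => φ x) (fun _ => hφ)
  have hXm : ∀ i, Measurable (X i) := fun i => hφ.comp (measurable_pi_apply i)
  have hlaw : ∀ i, P.map (X i) = ρ.map φ := fun i => by
    rw [← (hev i).map_eq, Measure.map_map hφ (hev i).measurable]; rfl
  have hident : ∀ i, ProbabilityTheory.IdentDistrib (X i) (X 0) P P := fun i =>
    ⟨(hXm i).aemeasurable, (hXm 0).aemeasurable, by rw [hlaw, hlaw]⟩
  have hmean : ∫ ω, X 0 ω ∂P = ∫ y, φ y ∂ρ := by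
    rw [← (hev 0).map_eq, integral_map (hev 0).measurable.aemeasurable
      hφ.aestronglyMeasurable]
  have hsq : ∫ ω, (X 0 ω) ^ 2 ∂P = ∫ y, φ y ^ 2 ∂ρ := by
    rw [← (hev 0).map_eq, integral_map (hev 0).measurable.aemeasurable
      (hφ.pow_const 2).aestronglyMeasurable]
  have hvar : ProbabilityTheory.variance (X 0) P
      = ∫ y, (φ y) ^ 2 ∂ρ - (∫ y, φ y ∂ρ) ^ 2 := by
    rw [ProbabilityTheory.variance_eq_sub hmem, hmean, ← hsq]; rfl
  have hY : ProbabilityTheory.HasLaw (id : ℝ → ℝ) (ProbabilityTheory.gaussianReal 0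
      (ProbabilityTheory.variance (X 0) P).toNNReal) (ProbabilityTheory.gaussianReal 0
      (ProbabilityTheory.variance (X 0) P).toNNReal) := ⟨aemeasurable_id, Measure.map_id⟩
  have H := (ProbabilityTheory.tendstoInDistribution_inv_sqrt_mul_sum_sub hY hmem hindep
    hident).tendsto
  have Hg := ProbabilityMeasure.tendsto_iff_forall_integral_tendsto.1 H g
  simp only [ProbabilityMeasure.coe_mk, Measure.map_id] at Hg
  rw [hvar] at Hg
  refine Hg.congr fun N => ?_
  congr 1
  unfold fluctLaw
  have hpi : P.map (fun ω (i : Fin N) => ω i) = Measure.pi fun _ => ρ := by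
    rw [hP, Measure.map_infinitePi_infinitePi_of_inj Fin.val_injective,
      Measure.infinitePi_eq_pi]
  rw [← hpi, Measure.map_map (by fun_prop) (by fun_prop)]
  congr 1
  ext ω
  simp only [Function.comp, hmean, X, Finset.sum_range]
  rw [div_eq_inv_mul]

/-- **CLT under vanishing relative entropy (from Proposition 6.3 of Wang–Zhao–Zhu).**
Let `ρ̄` be a probability measure on `ℝ^d` and `φ` a Schwartz function with mean
`m = ∫ φ dρ̄` and variance `v = ∫ φ² dρ̄ − m²`; let `G_φ` be the centered Gaussian on `ℝ`
with variance `v`.  If `ρ_N` are probability measures on `(ℝ^d)^N` with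
`H(ρ_N | ρ̄^{⊗N}) → 0`, then the laws `T_N ρ_N` of the normalized fluctuations converge
weakly to `G_φ`. -/
theorem statement12 (d : ℕ) (hd : 1 ≤ d)
    (ρ : Measure (EuclideanSpace ℝ (Fin d))) [IsProbabilityMeasure ρ]
    (φ : SchwartzMap (EuclideanSpace ℝ (Fin d)) ℝ)
    (ρN : (N : ℕ) → Measure (Fin N → EuclideanSpace ℝ (Fin d)))
    (hprob : ∀ N, IsProbabilityMeasure (ρN N))
    (hent : Tendsto (fun N => relEntropy (ρN N) (Measure.pi fun _ => ρ))
      atTop (nhds (0 : EReal))) :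
    ∀ g : BoundedContinuousFunction ℝ ℝ,
      Tendsto
        (fun N => ∫ t, g t ∂(fluctLaw d N φ (∫ y, φ y ∂ρ) (ρN N)))
        atTop
        (nhds (∫ t, g t
          ∂(ProbabilityTheory.gaussianReal 0
              (Real.toNNReal (∫ y, (φ y) ^ 2 ∂ρ - (∫ y, φ y ∂ρ) ^ 2))))) := by
  intro g
  have hφ : Measurable φ := φ.continuous.measurable
  have hclt := aux_clt d ρ φ g
  refine (tendsto_iff_of_dist ?_).1 hclt
  rw [Metric.tendsto_atTop]
  intro ε hε
  have hM0 := norm_nonneg g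
  set M := ‖g‖ + 1 with hM
  have hMpos : 0 < M := by positivity
  set s : ℝ := min 1 (ε / (4 * M)) with hsdef
  have hs : 0 < s := by positivity
  have hs1 : s ≤ 1 := min_le_left _ _
  have hs2 : s ≤ ε / (4 * M) := min_le_right _ _
  have hpos : (0 : EReal) < ((s ^ 2 : ℝ) : EReal) := by
    exact_mod_cast (by positivity : (0 : ℝ) < s ^ 2)
  obtain ⟨N0, hN0⟩ := eventually_atTop.1 (hent.eventually_lt_const hpos)
  refine ⟨N0, fun N hN => ?_⟩
  have hprobN := hprob N
  have hT : Measurable (fun x : Fin N → EuclideanSpace ℝ (Fin d) =>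
      ((∑ i, φ (x i)) - N * (∫ y, φ y ∂ρ)) / Real.sqrt N) := by fun_prop
  have hb := aux_tv (ρN N) (Measure.pi fun _ => ρ) _ (g.continuous.measurable.comp hT) M
    (fun x => (g.norm_coe_le_norm _).trans (by linarith)) s hs hs1 (hN0 N hN).le
  have hgm : ∀ Q : Measure ℝ, AEStronglyMeasurable g Q :=
    fun Q => g.continuous.measurable.aestronglyMeasurable
  rw [Real.dist_eq, sub_zero, abs_of_nonneg dist_nonneg, dist_comm, Real.dist_eq]
  unfold fluctLaw
  rw [integral_map hT.aemeasurable (hgm _), integral_map hT.aemeasurable (hgm _)]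
  refine lt_of_le_of_lt hb ?_
  have h5 : M * (2 * s) ≤ M * (2 * (ε / (4 * M))) := by gcongr
  have h6 : M * (2 * (ε / (4 * M))) = ε / 2 := by field_simp; ring
  linarith
end

section
/- Let (E, ℰ) be a measurable space, let ρ̄ be a probability measure on E, and let φ : E → ℝ be a bounded measurable function with m := ∫ φ dρ̄. Then there exist constants a > 0 and M < ∞, depending only on ‖φ‖_{L^∞}, such that for every integer N ≥ 2: ∫_{E^N} exp( (a/N) | Σ_{i=1}^N (φ(x_i) − m) |² ) dρ̄^{⊗N}(x_1,…,x_N) ≤ M. -/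
open MeasureTheory

universe u

open ProbabilityTheory in
lemma aux_gauss (s : ℝ) : ∫⁻ t : ℝ, ENNReal.ofReal (Real.exp (t * s - t ^ 2 / 2)) =
    ENNReal.ofReal (Real.sqrt (2 * Real.pi)) * ENNReal.ofReal (Real.exp (s ^ 2 / 2)) := by
  have h1 : ∀ t : ℝ, Real.exp (t * s - t ^ 2 / 2)
      = Real.exp (s ^ 2 / 2) * Real.exp (-(1/2) * (t - s) ^ 2) := by
    intro t
    rw [← Real.exp_add]; congr 1; ring
  have hi : Integrable (fun t : ℝ => Real.exp (-(1/2) * t ^ 2)) :=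
    integrable_exp_neg_mul_sq (by norm_num)
  have h2 : ∫⁻ t : ℝ, ENNReal.ofReal (Real.exp (-(1/2) * t ^ 2))
      = ENNReal.ofReal (Real.sqrt (2 * Real.pi)) := by
    rw [← ofReal_integral_eq_lintegral_ofReal hi (ae_of_all _ fun t => (Real.exp_pos _).le),
      integral_gaussian]
    congr 2; ring
  simp_rw [h1, ENNReal.ofReal_mul (Real.exp_pos _).le]
  rw [lintegral_const_mul _ (by fun_prop),
    lintegral_sub_right_eq_self (fun t : ℝ => ENNReal.ofReal (Real.exp (-(1/2) * t ^ 2))) s, h2,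
    mul_comm]

open ProbabilityTheory in
lemma aux_sub {Ω : Type*} [MeasurableSpace Ω] (μ : Measure Ω) [IsProbabilityMeasure μ]
    (X : Ω → ℝ) (hX : Measurable X) (c : NNReal) (h : HasSubgaussianMGF X c μ)
    (k : ℝ) (hk : 0 ≤ k) (hkc : k * c ≤ 1 / 2) :
    ∫ x, Real.exp (k / 2 * X x ^ 2) ∂μ ≤ Real.sqrt 2 := by
  have hs : Real.sqrt k ^ 2 = k := Real.sq_sqrt hk
  have hpi := Real.pi_pos
  have key : ENNReal.ofReal (Real.sqrt (2 * Real.pi)) *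
      ∫⁻ x, ENNReal.ofReal (Real.exp (k / 2 * X x ^ 2)) ∂μ
      ≤ ENNReal.ofReal (Real.sqrt (2 * Real.pi)) * ENNReal.ofReal (Real.sqrt 2) := by
    calc _ = ∫⁻ x, (∫⁻ t : ℝ,
            ENNReal.ofReal (Real.exp (t * (Real.sqrt k * X x) - t ^ 2 / 2))) ∂μ := by
          rw [← lintegral_const_mul _ (by fun_prop)]
          refine lintegral_congr fun x => ?_
          rw [aux_gauss, mul_pow, hs]
          congr 3; ring
      _ = ∫⁻ t : ℝ, ∫⁻ x,
            ENNReal.ofReal (Real.exp (t * (Real.sqrt k * X x) - t ^ 2 / 2)) ∂μ := by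
          apply lintegral_lintegral_swap
          apply Measurable.aemeasurable
          simp only [Function.uncurry_def]
          fun_prop
      _ ≤ ∫⁻ t : ℝ, ENNReal.ofReal (Real.exp (-(1/4) * t ^ 2)) := by
          refine lintegral_mono fun t => ?_
          have e : ∀ x, Real.exp (t * (Real.sqrt k * X x) - t ^ 2 / 2)
              = Real.exp (-(t ^ 2 / 2)) * Real.exp ((t * Real.sqrt k) * X x) := by
            intro x
            rw [← Real.exp_add]; congr 1; ring
          simp_rw [e]
          rw [← ofReal_integral_eq_lintegral_ofReal ((h.integrable_exp_mul _).const_mul _)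
            (ae_of_all _ fun t => by positivity), integral_const_mul]
          apply ENNReal.ofReal_le_ofReal
          have := h.mgf_le (t * Real.sqrt k)
          rw [mgf] at this
          calc _ ≤ Real.exp (-(t ^ 2 / 2)) * Real.exp (c * (t * Real.sqrt k) ^ 2 / 2) := by
                gcongr
            _ ≤ _ := by
                rw [← Real.exp_add, Real.exp_le_exp, mul_pow, hs]
                nlinarith [mul_le_mul_of_nonneg_right hkc (sq_nonneg t)]
      _ = _ := by
          rw [← ofReal_integral_eq_lintegral_ofReal (integrable_exp_neg_mul_sq (by norm_num))
            (ae_of_all _ fun t => (Real.exp_pos _).le), integral_gaussian,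
            ← ENNReal.ofReal_mul (by positivity), ← Real.sqrt_mul (by positivity)]
          congr 2; ring
  rw [ENNReal.mul_le_mul_iff_right (by simpa using hpi) ENNReal.ofReal_ne_top] at key
  rw [integral_eq_lintegral_of_nonneg_ae (ae_of_all _ fun t => (Real.exp_pos _).le)
    (Measurable.aestronglyMeasurable (by fun_prop))]
  exact ENNReal.toReal_le_of_le_ofReal (by positivity) key

/-- **Uniform-in-`N` Gaussian concentration of the normalized fluctuation of the
empirical average.**  For every bound `B` there are constants `a > 0` and `M < ∞`,
depending only on `B` (a bound on `‖φ‖_∞`), such that for every measurable space `E`,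
every probability measure `ρ̄` on `E`, every measurable `φ : E → ℝ` with `|φ| ≤ B` and
mean `m = ∫ φ dρ̄`, and every integer `N ≥ 2`:
`∫ exp((a/N)|∑_{i=1}^N (φ(x_i) − m)|²) dρ̄^{⊗N} ≤ M`. -/
theorem statement13 :
    ∀ B : ℝ, ∃ a : ℝ, 0 < a ∧ ∃ M : ℝ,
      ∀ (E : Type u) (_ : MeasurableSpace E)
        (ρ : Measure E), IsProbabilityMeasure ρ →
      ∀ φ : E → ℝ, Measurable φ → (∀ x, |φ x| ≤ B) →
      ∀ N : ℕ, 2 ≤ N →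
        ∫ x : Fin N → E,
            Real.exp (a / N * |∑ i, (φ (x i) - ∫ y, φ y ∂ρ)| ^ 2)
          ∂(Measure.pi fun _ => ρ)
        ≤ M := by
  intro B
  refine ⟨1 / (4 * (B ^ 2 + 1)), by positivity, Real.sqrt 2, ?_⟩
  intro E _ ρ _ φ hφ hB N hN
  have hN0 : (0:ℝ) < N := by positivity
  have h1 : ProbabilityTheory.HasSubgaussianMGF (fun x => φ x - ∫ y, φ y ∂ρ)
      ((‖B - (-B)‖₊ / 2) ^ 2) ρ :=
    ProbabilityTheory.hasSubgaussianMGF_of_mem_Icc hφ.aemeasurable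
      (ae_of_all _ fun x => abs_le.mp (hB x))
  have h2 : ProbabilityTheory.iIndepFun
      (fun (i : Fin N) (x : Fin N → E) => φ (x i) - ∫ y, φ y ∂ρ) (Measure.pi fun _ => ρ) :=
    ProbabilityTheory.iIndepFun_pi (X := fun _ x => φ x - ∫ y, φ y ∂ρ)
      (fun i => (hφ.sub_const _).aemeasurable)
  have h3 : ∀ i : Fin N, ProbabilityTheory.HasSubgaussianMGF
      (fun x : Fin N → E => φ (x i) - ∫ y, φ y ∂ρ) ((‖B - (-B)‖₊ / 2) ^ 2)
      (Measure.pi fun _ => ρ) := by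
    intro i
    have hm := (measurePreserving_eval (fun _ : Fin N => ρ) i)
    have := h1
    rw [← hm.map_eq] at this
    simpa [Function.comp_def, hm.map_eq] using this.of_map hm.measurable.aemeasurable
  have h4 := ProbabilityTheory.HasSubgaussianMGF.sum_of_iIndepFun h2 (s := Finset.univ)
    (fun i _ => h3 i)
  have h5 := aux_sub _ _ (by fun_prop) _ h4 (1 / (2 * N * (B ^ 2 + 1))) (by positivity) (by
    have : (((‖B - (-B)‖₊ / 2) ^ 2 : NNReal) : ℝ) = B ^ 2 := by
      push_cast
      rw [Real.norm_eq_abs, div_pow, sq_abs]; ring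
    rw [Finset.sum_const, Finset.card_univ, Fintype.card_fin, nsmul_eq_mul, NNReal.coe_mul, this,
      NNReal.coe_natCast, div_mul_eq_mul_div, div_le_div_iff₀ (by positivity) (by norm_num)]
    nlinarith)
  refine le_trans (le_of_eq ?_) h5
  refine integral_congr_ae (ae_of_all _ fun x => ?_)
  simp only [sq_abs]
  congr 2
  field_simp
  norm_num
end

section
/- Let E be a standard Borel (Polish) space, let ρ̄ be a probability measure on E, let N ≥ k ≥ 1 be integers, and let ρ_N be an exchangeable probability measure on E^N, i.e. invariant under every permutation of the N coordinates. Let ρ_{N,k} denote the marginal of ρ_N on the first k coordinates. Then ‖ρ_{N,k} − ρ̄^{⊗k}‖_{TV} ≤ √( 2 H( ρ_{N,k} | ρ̄^{⊗k} ) ) ≤ √( 2 (k/N) H( ρ_N | ρ̄^{⊗N} ) ); in particular H( ρ_{N,k} | ρ̄^{⊗k} ) ≤ (k/N) H( ρ_N | ρ̄^{⊗N} ). -/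
open MeasureTheory Classical

/-- The total variation norm `‖μ − ν‖_TV = |μ − ν|(E)` of the difference of two finite
measures, i.e. the total mass of the total-variation measure of the signed measure
`μ − ν`. -/
noncomputable def tvNorm {E : Type*} [MeasurableSpace E]
    (μ ν : Measure E) [IsFiniteMeasure μ] [IsFiniteMeasure ν] : ℝ :=
  ((μ.toSignedMeasure - ν.toSignedMeasure).totalVariation Set.univ).toReal

open InformationTheory ProbabilityTheory in
lemma relEntropy_eq_klDiv {E : Type*} [MeasurableSpace E] (μ ν : Measure E)
    [IsProbabilityMeasure μ] [IsProbabilityMeasure ν] :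
    relEntropy μ ν = ((klDiv μ ν : ENNReal) : EReal) := by
  unfold relEntropy
  by_cases hac : μ ≪ ν
  · rw [integrable_rnDeriv_mul_log_iff hac]
    by_cases hi : Integrable (llr μ ν) μ
    · rw [if_pos ⟨hac, hi⟩]
      have h1 := toReal_klDiv_of_measure_eq (μ := μ) (ν := ν) hac (by simp)
      have h2 : klDiv μ ν ≠ ⊤ := klDiv_ne_top hac hi
      have h3 := integral_rnDeriv_smul (f := llr μ ν) hac
      simp only [smul_eq_mul, llr] at h3
      rw [h3]
      rw [← EReal.coe_toReal (x := ((klDiv μ ν : ENNReal) : EReal)) (by simpa using h2) (by simp)]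
      rw [EReal.toReal_coe_ennreal, h1]
      rfl
    · rw [if_neg (by tauto), klDiv_of_not_integrable hi]; rfl
  · rw [if_neg (by tauto), klDiv_of_not_ac hac]; rfl

lemma klFun_lower (t : ℝ) (ht : 0 ≤ t) :
    3 * (t - 1) ^ 2 ≤ (2 * t + 4) * InformationTheory.klFun t := by
  rcases ht.eq_or_lt with rfl | ht
  · rw [InformationTheory.klFun_zero]; norm_num
  set h : ℝ → ℝ := fun t => Real.log t - (5 * t ^ 2 - 4 * t - 1) / (2 * t ^ 2 + 4 * t) with hh
  have hd : ∀ x : ℝ, 0 < x → HasDerivAt h ((x - 1) ^ 3 / (x ^ 2 * (x + 2) ^ 2)) x := by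
    intro x hx
    have hne : 2 * x ^ 2 + 4 * x ≠ 0 := by positivity
    have e1 : HasDerivAt (fun t : ℝ => 5 * t ^ 2 - 4 * t - 1) (10 * x - 4) x := by
      refine ((((hasDerivAt_pow 2 x).const_mul 5).sub
        ((hasDerivAt_id x).const_mul 4)).sub_const 1).congr_deriv ?_
      norm_num; ring
    have e2 : HasDerivAt (fun t : ℝ => 2 * t ^ 2 + 4 * t) (4 * x + 4) x := by
      refine (((hasDerivAt_pow 2 x).const_mul 2).add
        ((hasDerivAt_id x).const_mul 4)).congr_deriv ?_
      norm_num; ring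
    refine ((Real.hasDerivAt_log hx.ne').sub (e1.div e2 hne)).congr_deriv ?_
    have : 2 * x ^ 2 + 4 * x = 2 * x * (x + 2) := by ring
    rw [this]
    field_simp
    ring
  have h1 : h 1 = 0 := by simp [hh]; norm_num
  have hpos : 0 ≤ h t := by
    rcases le_total t 1 with h' | h'
    · have : AntitoneOn h (Set.Icc t 1) := by
        apply antitoneOn_of_deriv_nonpos (convex_Icc _ _)
        · intro x hx
          exact (hd x (lt_of_lt_of_le ht hx.1)).continuousAt.continuousWithinAt
        · intro x hx
          rw [interior_Icc] at hx
          exact (hd x (ht.trans hx.1)).differentiableAt.differentiableWithinAt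
        · intro x hx
          rw [interior_Icc] at hx
          rw [(hd x (ht.trans hx.1)).deriv]
          apply div_nonpos_of_nonpos_of_nonneg _ (by positivity)
          have : x - 1 ≤ 0 := by linarith [hx.2]
          nlinarith [sq_nonneg (x - 1)]
      have := this (Set.left_mem_Icc.2 h') (Set.right_mem_Icc.2 h') h'
      rwa [h1] at this
    · have : MonotoneOn h (Set.Icc 1 t) := by
        apply monotoneOn_of_deriv_nonneg (convex_Icc _ _)
        · intro x hx
          exact (hd x (lt_of_lt_of_le one_pos hx.1)).continuousAt.continuousWithinAt
        · intro x hx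
          rw [interior_Icc] at hx
          exact (hd x (one_pos.trans hx.1)).differentiableAt.differentiableWithinAt
        · intro x hx
          rw [interior_Icc] at hx
          rw [(hd x (one_pos.trans hx.1)).deriv]
          have : 0 ≤ x - 1 := by linarith [hx.1]
          positivity
      have := this (Set.left_mem_Icc.2 h') (Set.right_mem_Icc.2 h') h'
      rwa [h1] at this
  have key : t * (2 * t + 4) * h t = (2 * t + 4) * InformationTheory.klFun t - 3 * (t - 1) ^ 2 := by
    simp only [hh, InformationTheory.klFun_apply]
    have : 2 * t ^ 2 + 4 * t = t * (2 * t + 4) := by ring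
    rw [this]
    field_simp
    ring
  have : 0 ≤ t * (2 * t + 4) * h t := by positivity
  linarith

lemma abs_sub_one_le (t : ℝ) (ht : 0 ≤ t) (c : ℝ) (hc : 0 < c) :
    2 * |t - 1| ≤ c * ((2 * t + 4) / 3) + InformationTheory.klFun t / c := by
  have h1 := klFun_lower t ht
  have h2 := InformationTheory.klFun_nonneg ht
  set k := InformationTheory.klFun t
  set a := (2 * t + 4) / 3 with ha
  have ha0 : 0 ≤ a := by positivity
  have h3 : |t - 1| ^ 2 ≤ a * k := by rw [sq_abs, ha]; linarith
  have h4 : 0 ≤ c * a + k / c := by positivity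
  apply abs_le_of_sq_le_sq' _ h4 |>.2
  have h5 : (c * a) * (k / c) = a * k := by field_simp
  nlinarith [sq_nonneg (c * a - k / c)]

open InformationTheory in
lemma tvNorm_le_integral {E : Type*} [MeasurableSpace E] (μ ν : Measure E)
    [IsProbabilityMeasure μ] [IsProbabilityMeasure ν] (hac : μ ≪ ν) :
    tvNorm μ ν ≤ ∫ x, |(μ.rnDeriv ν x).toReal - 1| ∂ν := by
  unfold tvNorm
  obtain ⟨i, hi, hi2, hi3, hp, hn⟩ :=
    (μ.toSignedMeasure - ν.toSignedMeasure).toJordanDecomposition_spec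
  have hint : Integrable (fun x => (μ.rnDeriv ν x).toReal - 1) ν :=
    Measure.integrable_toReal_rnDeriv.sub (integrable_const 1)
  have hs : ∀ s, MeasurableSet s → (μ.toSignedMeasure - ν.toSignedMeasure) s
      = ∫ x in s, ((μ.rnDeriv ν x).toReal - 1) ∂ν := by
    intro s hs
    rw [integral_sub Measure.integrable_toReal_rnDeriv.integrableOn (integrable_const 1),
      Measure.setIntegral_toReal_rnDeriv hac]
    simp [Measure.toSignedMeasure_apply_measurable hs]
  rw [SignedMeasure.totalVariation, ← measureReal_def, hp, hn, measureReal_add_apply,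
    SignedMeasure.toMeasureOfZeroLE_real_apply _ _ _ MeasurableSet.univ,
    SignedMeasure.toMeasureOfLEZero_real_apply _ _ _ MeasurableSet.univ,
    Set.inter_univ, Set.inter_univ, hs i hi, hs iᶜ hi.compl,
    ← integral_add_compl hi hint.abs, ← integral_neg]
  apply add_le_add
  · exact integral_mono hint.integrableOn hint.abs.integrableOn (fun x => le_abs_self _)
  · exact integral_mono hint.neg.integrableOn hint.abs.integrableOn (fun x => neg_le_abs _)

open InformationTheory in
lemma pinsker_kl {E : Type*} [MeasurableSpace E] (μ ν : Measure E)
    [IsProbabilityMeasure μ] [IsProbabilityMeasure ν] (h : klDiv μ ν ≠ ⊤) :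
    tvNorm μ ν ^ 2 ≤ 2 * (klDiv μ ν).toReal := by
  obtain ⟨hac, hi⟩ := klDiv_ne_top_iff.1 h
  have hnn : 0 ≤ tvNorm μ ν := ENNReal.toReal_nonneg
  rcases hnn.eq_or_lt with h0 | h0
  · rw [← h0]; simp
  have h1 := tvNorm_le_integral μ ν hac
  set δ := tvNorm μ ν
  have hik : Integrable (fun x => klFun (μ.rnDeriv ν x).toReal) ν :=
    (integrable_klFun_rnDeriv_iff hac).2 hi
  have hir : Integrable (fun x => (μ.rnDeriv ν x).toReal) ν := Measure.integrable_toReal_rnDeriv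
  have hint : Integrable (fun x => (μ.rnDeriv ν x).toReal - 1) ν :=
    hir.sub (integrable_const 1)
  have hia : Integrable (fun x => (δ / 2) * ((2 * (μ.rnDeriv ν x).toReal + 4) / 3)) ν :=
    (((hir.const_mul 2).add (integrable_const 4)).div_const 3).const_mul _
  have h2 : ∫ x, 2 * |(μ.rnDeriv ν x).toReal - 1| ∂ν
      ≤ ∫ x, ((δ / 2) * ((2 * (μ.rnDeriv ν x).toReal + 4) / 3)
        + klFun (μ.rnDeriv ν x).toReal / (δ / 2)) ∂ν :=
    integral_mono (hint.abs.const_mul 2) (hia.add (hik.div_const _))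
      (fun x => abs_sub_one_le _ ENNReal.toReal_nonneg _ (by positivity))
  have hone : ∫ x, (μ.rnDeriv ν x).toReal ∂ν = 1 := by
    rw [Measure.integral_toReal_rnDeriv hac]; simp
  rw [integral_add hia (hik.div_const _), integral_const_mul, integral_const_mul,
    integral_div, integral_div, integral_add (hir.const_mul 2) (integrable_const 4),
    integral_const_mul, hone, ← toReal_klDiv_eq_integral_klFun hac] at h2
  simp only [integral_const, probReal_univ, smul_eq_mul, one_mul] at h2
  set K := (klDiv μ ν).toReal
  have h3 : δ ≤ K / (δ / 2) := by linarith
  rw [le_div_iff₀ (by positivity)] at h3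
  nlinarith

def Exch {E : Type*} [MeasurableSpace E] {n : ℕ} (P : Measure (Fin n → E)) : Prop :=
  ∀ σ : Equiv.Perm (Fin n), Measure.map (fun x => x ∘ σ) P = P

noncomputable def ini {E : Type*} [MeasurableSpace E] {n : ℕ} (P : Measure (Fin (n + 1) → E)) :
    Measure (Fin n → E) := P.map (fun x i => x (Fin.castSucc i))

def spl {E : Type*} {n : ℕ} (x : Fin (n + 1) → E) : (Fin n → E) × E :=
  (fun i => x (Fin.castSucc i), x (Fin.last n))

lemma measurable_spl {E : Type*} [MeasurableSpace E] {n : ℕ} :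
    Measurable (spl (E := E) (n := n)) := by unfold spl; fun_prop

instance ini_prob {E : Type*} [MeasurableSpace E] {n : ℕ} (P : Measure (Fin (n + 1) → E))
    [IsProbabilityMeasure P] : IsProbabilityMeasure (ini P) :=
  Measure.isProbabilityMeasure_map
    (measurable_pi_lambda _ (fun i => measurable_pi_apply _)).aemeasurable

instance spl_prob {E : Type*} [MeasurableSpace E] {n : ℕ} (P : Measure (Fin (n + 1) → E))
    [IsProbabilityMeasure P] : IsProbabilityMeasure (P.map spl) :=
  Measure.isProbabilityMeasure_map measurable_spl.aemeasurable

lemma exch_ini {E : Type*} [MeasurableSpace E] {n : ℕ} {P : Measure (Fin (n + 1) → E)}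
    (h : Exch P) : Exch (ini P) := by
  intro σ
  unfold ini
  rw [Measure.map_map (by fun_prop) (by fun_prop)]
  conv_rhs => rw [← h (σ.viaFintypeEmbedding Fin.castSuccEmb)]
  rw [Measure.map_map (by fun_prop) (by fun_prop)]
  congr 1
  ext x i
  have := σ.viaFintypeEmbedding_apply_image Fin.castSuccEmb i
  simp at this
  simp [this]

lemma map_tail_eq {E : Type*} [MeasurableSpace E] {n : ℕ} {P : Measure (Fin (n + 1) → E)}
    (h : Exch P) : P.map (fun x (i : Fin n) => x i.succ) = ini P := by
  unfold ini
  conv_rhs => rw [← h (finRotate (n + 1))]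
  rw [Measure.map_map (by fun_prop) (by fun_prop)]
  congr 1
  ext x i
  simp

open InformationTheory in
noncomputable def dd {E : Type*} [MeasurableSpace E] (ρ : Measure E) {n : ℕ}
    (P : Measure (Fin (n + 1) → E)) : ENNReal := klDiv (P.map spl) ((ini P).prod ρ)

open InformationTheory in
lemma dd_mono {E : Type*} [MeasurableSpace E] (ρ : Measure E) [IsProbabilityMeasure ρ] {n : ℕ}
    (P : Measure (Fin (n + 2) → E)) [IsProbabilityMeasure P] (h : Exch P) :
    dd ρ (ini P) ≤ dd ρ P := by
  unfold dd
  let T : (Fin (n + 1) → E) × E → (Fin n → E) × E :=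
    Prod.map (fun y i => y i.succ) id
  have hT : Measurable T := by
    apply Measurable.prodMap <;> fun_prop
  have h1 : (ini P).map spl = (P.map spl).map T := by
    rw [Measure.map_map hT measurable_spl]
    unfold ini
    conv_lhs => rw [← h (finRotate (n + 2))]
    rw [Measure.map_map measurable_spl (by fun_prop),
      Measure.map_map (measurable_spl.comp (by fun_prop)) (by fun_prop)]
    congr 1
    ext x i
    · simp [T, spl]
    · simp [T, spl]
  have h2 : (ini (ini P)).prod ρ = ((ini P).prod ρ).map T := by
    rw [← Measure.map_prod_map _ _ (by fun_prop) measurable_id, Measure.map_id,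
      map_tail_eq (exch_ini h)]
  rw [h1, h2]
  exact klDiv_map_le _ _ hT

lemma map_spl_pi {E : Type*} [MeasurableSpace E] (ρ : Measure E) [IsProbabilityMeasure ρ] {n : ℕ} :
    (Measure.pi fun _ : Fin (n + 1) => ρ).map spl = (Measure.pi fun _ : Fin n => ρ).prod ρ := by
  have h := (measurePreserving_piFinSuccAbove (fun _ : Fin (n + 1) => ρ) (Fin.last n)).map_eq
  rw [← Measure.prod_swap, ← h, Measure.map_map measurable_swap (by fun_prop)]
  congr 1
  ext x i <;> simp [spl, MeasurableEquiv.piFinSuccAbove, Fin.init]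

open InformationTheory in
lemma kl_chain {E : Type*} [MeasurableSpace E] [StandardBorelSpace E] (ρ : Measure E)
    [IsProbabilityMeasure ρ] {n : ℕ}
    (P : Measure (Fin (n + 1) → E)) [IsProbabilityMeasure P] :
    klDiv P (Measure.pi fun _ => ρ) = klDiv (ini P) (Measure.pi fun _ => ρ) + dd ρ P := by
  have hne : Nonempty E := by
    obtain ⟨x⟩ := (inferInstance : (NeZero ρ)) |>.out |> (fun h => Measure.nonempty_of_neZero ρ)
    exact ⟨x⟩
  have hg : Measurable (fun p : (Fin n → E) × E => (Fin.snoc p.1 p.2 : Fin (n + 1) → E)) := by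
    rw [measurable_pi_iff]
    intro j
    refine Fin.lastCases ?_ (fun i => ?_) j
    · simpa using measurable_snd
    · simp only [Fin.snoc_castSucc]; fun_prop
  have hinv : ∀ M : Measure (Fin (n + 1) → E), (M.map spl).map
      (fun p : (Fin n → E) × E => (Fin.snoc p.1 p.2 : Fin (n + 1) → E)) = M := by
    intro M
    rw [Measure.map_map hg measurable_spl]
    convert Measure.map_id
    ext x j
    refine Fin.lastCases ?_ (fun i => ?_) j <;> simp [spl]
  have h1 : klDiv P (Measure.pi fun _ => ρ)
      = klDiv (P.map spl) ((Measure.pi fun _ => ρ).map spl) := by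
    apply le_antisymm
    · have := klDiv_map_le (P.map spl) ((Measure.pi fun _ => ρ).map spl) hg
      rwa [hinv, hinv] at this
    · exact klDiv_map_le _ _ measurable_spl
  have hfst : (P.map spl).fst = ini P := by
    rw [Measure.fst, Measure.map_map measurable_fst measurable_spl]; rfl
  have hdis := (P.map spl).disintegrate (P.map spl).condKernel
  rw [hfst] at hdis
  rw [h1, map_spl_pi]
  unfold dd
  rw [← hdis, ← Measure.compProd_const, ← Measure.compProd_const]
  exact klDiv_compProd_eq_add _ _ _ _

open InformationTheory in
lemma kl_le_mul_dd {E : Type*} [MeasurableSpace E] [StandardBorelSpace E] (ρ : Measure E)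
    [IsProbabilityMeasure ρ] {n : ℕ}
    (P : Measure (Fin (n + 1) → E)) [IsProbabilityMeasure P] (h : Exch P) :
    klDiv (ini P) (Measure.pi fun _ => ρ) ≤ n * dd ρ P := by
  induction n with
  | zero =>
    have : ini P = Measure.pi fun _ => ρ := by
      ext s hs
      rcases Set.Subsingleton.eq_empty_or_singleton (Set.subsingleton_of_subsingleton (s := s))
        with rfl | ⟨x, rfl⟩
      · simp
      · have : ({x} : Set (Fin 0 → E)) = Set.univ := by
          ext y; simp [Subsingleton.elim y x]
        rw [this]; simp
    rw [this, klDiv_self]; simp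
  | succ n ih =>
    rw [kl_chain ρ (ini P)]
    have h1 := ih (ini P) (exch_ini h)
    have h2 := dd_mono ρ P h
    calc _ ≤ n * dd ρ (ini P) + dd ρ (ini P) := by gcongr
      _ = ((n + 1 : ℕ) : ENNReal) * dd ρ (ini P) := by push_cast; ring
      _ ≤ _ := by gcongr

open InformationTheory in
lemma kl_step {E : Type*} [MeasurableSpace E] [StandardBorelSpace E] (ρ : Measure E)
    [IsProbabilityMeasure ρ] {n : ℕ}
    (P : Measure (Fin (n + 1) → E)) [IsProbabilityMeasure P] (h : Exch P) :
    ((n + 1 : ℕ) : ENNReal) * klDiv (ini P) (Measure.pi fun _ => ρ)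
      ≤ n * klDiv P (Measure.pi fun _ => ρ) := by
  rw [kl_chain ρ P, mul_add]
  push_cast
  rw [add_mul, one_mul]
  gcongr
  exact kl_le_mul_dd ρ P h

open InformationTheory in
lemma kl_marg {E : Type*} [MeasurableSpace E] [StandardBorelSpace E] (ρ : Measure E)
    [IsProbabilityMeasure ρ] {k : ℕ} (hk : 1 ≤ k) (N : ℕ) (hkN : k ≤ N) :
    ∀ (P : Measure (Fin N → E)) [IsProbabilityMeasure P], Exch P →
    (N : ENNReal) * klDiv (P.map (fun (x : Fin N → E) (i : Fin k) => x (Fin.castLE hkN i)))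
      (Measure.pi fun _ => ρ) ≤ k * klDiv P (Measure.pi fun _ => ρ) := by
  induction N, hkN using Nat.le_induction with
  | base =>
    intro P _ _
    have : (fun (x : Fin k → E) (i : Fin k) => x (Fin.castLE le_rfl i)) = id := by
      ext x i; simp
    rw [this, Measure.map_id]
  | succ N hkN ih =>
    intro P _ h
    have h1 := ih (ini P) (exch_ini h)
    have h2 := kl_step ρ P h
    have h3 : (ini P).map (fun (x : Fin N → E) (i : Fin k) => x (Fin.castLE hkN i))
      = P.map (fun x (i : Fin k) => x (Fin.castLE (hkN.trans (Nat.le_succ N)) i)) := by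
      unfold ini
      rw [Measure.map_map (by fun_prop) (by fun_prop)]
      rfl
    rw [h3] at h1
    have hN : (N : ENNReal) ≠ 0 := by simp; omega
    rw [← ENNReal.mul_le_mul_iff_right hN (ENNReal.natCast_ne_top N)]
    calc _ = ((N + 1 : ℕ) : ENNReal) * (N * klDiv (P.map (fun x (i : Fin k) =>
            x (Fin.castLE (hkN.trans (Nat.le_succ N)) i))) (Measure.pi fun _ => ρ)) := by ring
      _ ≤ ((N + 1 : ℕ) : ENNReal) * (k * klDiv (ini P) (Measure.pi fun _ => ρ)) := by gcongr
      _ = k * (((N + 1 : ℕ) : ENNReal) * klDiv (ini P) (Measure.pi fun _ => ρ)) := by ring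
      _ ≤ k * (N * klDiv P (Measure.pi fun _ => ρ)) := by gcongr
      _ = _ := by ring

/-- **Subadditivity of relative entropy and the Csiszár–Kullback–Pinsker inequality for
marginals of exchangeable laws.**  Let `E` be a standard Borel space, `ρ̄` a probability
measure on `E`, `N ≥ k ≥ 1`, and let `ρ_N` be an exchangeable probability measure on
`E^N` with marginal `ρ_{N,k}` on the first `k` coordinates.  Then (with the inequalities
in the extended reals, squaring the Pinsker bounds):
`‖ρ_{N,k} − ρ̄^{⊗k}‖²_TV ≤ 2 H(ρ_{N,k} | ρ̄^{⊗k}) ≤ 2 (k/N) H(ρ_N | ρ̄^{⊗N})`;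
in particular `H(ρ_{N,k} | ρ̄^{⊗k}) ≤ (k/N) H(ρ_N | ρ̄^{⊗N})`. -/
theorem statement14 {E : Type*} [MeasurableSpace E] [StandardBorelSpace E]
    (ρ : Measure E) [IsProbabilityMeasure ρ]
    {N k : ℕ} (hk : 1 ≤ k) (hkN : k ≤ N)
    (ρN : Measure (Fin N → E)) [IsProbabilityMeasure ρN]
    (hexch : ∀ σ : Equiv.Perm (Fin N), Measure.map (fun x => x ∘ σ) ρN = ρN)
    (ρNk : Measure (Fin k → E)) [IsProbabilityMeasure ρNk]
    (hmarg : ρNk =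
      Measure.map (fun (x : Fin N → E) (i : Fin k) => x (Fin.castLE hkN i)) ρN) :
    ((tvNorm ρNk (Measure.pi fun _ : Fin k => ρ) ^ 2 : ℝ) : EReal)
        ≤ ((2 : ℝ) : EReal) * relEntropy ρNk (Measure.pi fun _ : Fin k => ρ) ∧
    relEntropy ρNk (Measure.pi fun _ : Fin k => ρ)
        ≤ (((k : ℝ) / (N : ℝ) : ℝ) : EReal) * relEntropy ρN (Measure.pi fun _ : Fin N => ρ) ∧
    ((tvNorm ρNk (Measure.pi fun _ : Fin k => ρ) ^ 2 : ℝ) : EReal)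
        ≤ ((2 * (k : ℝ) / (N : ℝ) : ℝ) : EReal)
            * relEntropy ρN (Measure.pi fun _ : Fin N => ρ) := by
  rw [relEntropy_eq_klDiv, relEntropy_eq_klDiv]
  have hNpos : (0 : ℝ) < N := by exact_mod_cast (by omega : 0 < N)
  have hkpos : (0 : ℝ) < k := by exact_mod_cast (by omega : 0 < k)
  have hm := kl_marg ρ hk N hkN ρN hexch
  rw [← hmarg] at hm
  have hp := pinsker_kl ρNk (Measure.pi fun _ : Fin k => ρ)
  set A := InformationTheory.klDiv ρNk (Measure.pi fun _ : Fin k => ρ)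
  set B := InformationTheory.klDiv ρN (Measure.pi fun _ : Fin N => ρ)
  set δ := tvNorm ρNk (Measure.pi fun _ : Fin k => ρ)
  have c1 : ((δ ^ 2 : ℝ) : EReal) ≤ ((2 : ℝ) : EReal) * (A : EReal) := by
    by_cases hA : A = ⊤
    · rw [hA, EReal.coe_ennreal_top, EReal.coe_mul_top_of_pos (by norm_num)]; exact le_top
    · have := hp hA
      rw [← EReal.coe_toReal (x := (A : EReal)) (by simpa using hA) (by simp),
        EReal.toReal_coe_ennreal, ← EReal.coe_mul]
      exact_mod_cast this
  by_cases hB : B = ⊤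
  · refine ⟨c1, ?_, ?_⟩
    · rw [hB, EReal.coe_ennreal_top, EReal.coe_mul_top_of_pos (by positivity)]; exact le_top
    · rw [hB, EReal.coe_ennreal_top, EReal.coe_mul_top_of_pos (by positivity)]; exact le_top
  have hkB : (k : ENNReal) * B ≠ ⊤ := ENNReal.mul_ne_top (ENNReal.natCast_ne_top k) hB
  have hA : A ≠ ⊤ := by
    intro hA
    rw [hA, ENNReal.mul_top (by simp; omega)] at hm
    exact hkB (top_le_iff.1 hm)
  have hr := ENNReal.toReal_mono hkB hm
  rw [ENNReal.toReal_mul, ENNReal.toReal_mul, ENNReal.toReal_natCast, ENNReal.toReal_natCast] at hr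
  have hAB : A.toReal ≤ (k : ℝ) / N * B.toReal := by
    rw [div_mul_eq_mul_div, le_div_iff₀ hNpos]; linarith
  have eB : (B : EReal) = ((B.toReal : ℝ) : EReal) := by
    rw [← EReal.coe_toReal (x := (B : EReal)) (by simpa using hB) (by simp),
        EReal.toReal_coe_ennreal]
  have eA : (A : EReal) = ((A.toReal : ℝ) : EReal) := by
    rw [← EReal.coe_toReal (x := (A : EReal)) (by simpa using hA) (by simp),
        EReal.toReal_coe_ennreal]
  refine ⟨c1, ?_, ?_⟩
  · rw [eA, eB, ← EReal.coe_mul]; exact_mod_cast hAB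
  · rw [eB, ← EReal.coe_mul, EReal.coe_le_coe_iff]
    have := hp hA
    calc δ ^ 2 ≤ 2 * A.toReal := this
      _ ≤ 2 * ((k : ℝ) / N * B.toReal) := by linarith
      _ = _ := by ring
end
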